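/- There exists a sequence of reals t_k with t_k → 0 as k → ∞ such that for every integer k ≥ 3 and every real r with 0 < r < 2^(k-1)·ln 2 − (ln 2)/2 − (1 + t_k)/2, the probability that a random k-CNF formula F_k(n, m) with m = ⌊rn⌋ clauses is NAE-satisfiable tends to 1 as n → ∞. -/

import Mathlib

/-- A proper `k`-clause on `n` Boolean variables: a set of `k` literals
on `k` distinct variables.  A literal is a pair `(v, s)`. -/
def IsProperClause (n k : ℕ) (C : Finset (Fin n × Bool)) : Prop :=
  C.card = k ∧ (C.image Prod.fst).card = k

/-- An assignment NAE-satisfies a clause if it satisfies at least one literal and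
fails to satisfy at least one literal. -/
def NAESatisfiesClause {n : ℕ} (σ : Fin n → Bool) (C : Finset (Fin n × Bool)) : Prop :=
  (∃ l ∈ C, σ l.1 = l.2) ∧ (∃ l ∈ C, σ l.1 ≠ l.2)

/-- A formula is NAE-satisfiable if some assignment NAE-satisfies every clause. -/
def IsNAESatisfiable {n : ℕ} (F : Finset (Finset (Fin n × Bool))) : Prop :=
  ∃ σ : Fin n → Bool, ∀ C ∈ F, NAESatisfiesClause σ C

/-!
Replace the random formula by independent uniform ordered clauses and let `f` be the indicator that
a clause is NAE-satisfied, normalised to have mean one. The second moment of the normalised number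
of solutions `Z_f = 𝔼 σ, ∏ f` is governed by the pair kernel `Q(x)` of two assignments of overlap
`x`, and below the density bound its energy never beats the entropy of `x`; hence `E Z_f ^ 2` is
bounded, but this only shows that `Z_f ≠ 0` with probability bounded away from zero.

To obtain high probability without a sharp threshold theorem, compare `f` with a smoothed, strictly
positive weight `w`. The kernels of the pairs `(f, f)`, `(f, w)` and `(w, w)` agree to second order
at `x = 0`, where the second moment concentrates, so `E (Z_f - Z_w) ^ 2 → 0`. On the other hand
`E (-log Z_w)` stays bounded: adding clauses one at a time, the Jensen inequality bounds the
expected increment by a multiple of `1 / n` times the current value plus a constant, and a discrete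
Grönwall argument applies. So with high probability `Z_w` is not small and `Z_f` is close to it,
whence `Z_f ≠ 0`.

Finally, every set of `m` proper clauses arises from at least `m! * k! ^ m` sequences of ordered
clauses, and those sequences make up a constant fraction of all of them.
-/

open Finset Filter Topology Real
open scoped BigOperators

section LogarithmicMoments

lemma sub_one_sub_sq_le_log {y : ℝ} (hy : 2 / 3 ≤ y) : y - 1 - (y - 1) ^ 2 ≤ log y := by
  have hy_pos : 0 < y := by linarith
  rcases le_total 1 y with h | h
  · calc y - 1 - (y - 1) ^ 2 ≤ 1 - y⁻¹ := by
          rw [← sub_nonneg]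
          have : 1 - y⁻¹ - (y - 1 - (y - 1) ^ 2) = (y - 1) ^ 2 * (y - 1) / y := by
            field_simp; ring
          rw [this]
          exact div_nonneg (mul_nonneg (sq_nonneg _) (sub_nonneg.2 h)) hy_pos.le
      _ ≤ log y := one_sub_inv_le_log_of_pos hy_pos
  · have habs : |1 - y| = 1 - y := abs_of_nonneg (sub_nonneg.2 h)
    have hseries := abs_log_sub_add_sum_range_le (x := 1 - y) (by rw [habs]; linarith) 2
    have hremainder : (1 - y) ^ 3 / y ≤ (1 - y) ^ 2 / 2 := by
      rw [div_le_div_iff₀ hy_pos two_pos]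
      nlinarith [sq_nonneg (1 - y)]
    norm_num [sum_range_succ, habs] at hseries
    linarith [(abs_le.1 hseries).1]

variable {A : Type*} [Fintype A] [Nonempty A]

lemma one_sub_expect_sq_le_expect_log (y : A → ℝ) (hy : ∀ a, 2 / 3 ≤ y a)
    (hmean : 𝔼 a, y a = 1) : 1 - 𝔼 a, y a ^ 2 ≤ 𝔼 a, log (y a) :=
  calc 1 - 𝔼 a, y a ^ 2 = 𝔼 a, (y a - 1 - (y a - 1) ^ 2) := by
        have hexpand (a : A) : y a - 1 - (y a - 1) ^ 2 = 3 * y a - 2 - y a ^ 2 := by ring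
        simp_rw [hexpand, expect_sub_distrib, ← mul_expect, hmean, Fintype.expect_const]
        ring
    _ ≤ 𝔼 a, log (y a) := expect_le_expect fun a _ ↦ sub_one_sub_sq_le_log (hy a)

lemma expect_mul_le_mul_log_expect_mul_exp (p g : A → ℝ) (hp : ∀ a, 0 < p a) :
    𝔼 a, p a * g a ≤ (𝔼 a, p a) * (log (𝔼 a, p a * exp (g a)) - log (𝔼 a, p a)) := by
  have hP : 0 < 𝔼 a, p a := expect_pos (fun a _ ↦ hp a) univ_nonempty
  have hQ : 0 < 𝔼 a, p a * exp (g a) :=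
    expect_pos (fun a _ ↦ mul_pos (hp a) (exp_pos _)) univ_nonempty
  set P := 𝔼 a, p a with hP_def
  set Q := 𝔼 a, p a * exp (g a) with hQ_def
  have htangent (a : A) :
      p a * g a ≤ p a * (log Q - log P - 1) + p a * exp (g a) * (P / Q) := by
    have hexp : exp (g a - (log Q - log P)) = exp (g a) * (P / Q) := by
      rw [sub_sub_eq_add_sub, add_sub_assoc, exp_add, exp_sub, exp_log hP, exp_log hQ]
    have hle := mul_le_mul_of_nonneg_left (add_one_le_exp (g a - (log Q - log P))) (hp a).le
    rw [hexp] at hle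
    linarith
  calc 𝔼 a, p a * g a
      ≤ 𝔼 a, (p a * (log Q - log P - 1) + p a * exp (g a) * (P / Q)) :=
        expect_le_expect fun a _ ↦ htangent a
    _ = P * (log Q - log P) := by
        rw [expect_add_distrib, ← expect_mul, ← expect_mul, ← hP_def, ← hQ_def,
          mul_div_cancel₀ _ hQ.ne']
        ring

lemma expect_log_le_log_expect (g : A → ℝ) (hg : ∀ a, 0 < g a) :
    𝔼 a, log (g a) ≤ log (𝔼 a, g a) := by
  simpa [exp_log (hg _)] using
    expect_mul_le_mul_log_expect_mul_exp (fun _ ↦ 1) (fun a ↦ log (g a)) fun _ ↦ one_pos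

end LogarithmicMoments

section PartitionFunction

variable {C S : Type*} {m : ℕ}

section Constraints

variable [Fintype C]

/-- The two-replica kernel: the correlation of the weights `w` at `σ` and `v` at `τ` of a common
uniformly random constraint. -/
noncomputable def pairCorrelation (w v : C → S → ℝ) (σ τ : S) : ℝ := 𝔼 c, w c σ * v c τ

lemma expect_prod_eq_pow {ι : Type*} [Fintype ι] [DecidableEq ι] (g : C → ℝ) :
    𝔼 F : ι → C, ∏ i, g (F i) = (𝔼 c, g c) ^ Fintype.card ι := by
  simp_rw [Fintype.expect_eq_sum_div_card, ← Fintype.prod_sum]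
  simp [div_pow]

lemma expect_fin_succ_eq (g : (Fin (m + 1) → C) → ℝ) :
    𝔼 F, g F = 𝔼 F : Fin m → C, 𝔼 c, g (Fin.cons c F) := by
  rw [expect_comm, ← expect_product', univ_product_univ]
  exact (Fintype.expect_equiv (Fin.consEquiv fun _ ↦ C) _ _ fun _ ↦ rfl).symm

lemma expect_prod_mul_prod (w v : C → S → ℝ) (σ τ : S) :
    𝔼 F : Fin m → C, (∏ i, w (F i) σ) * ∏ i, v (F i) τ = pairCorrelation w v σ τ ^ m := by
  simp_rw [← prod_mul_distrib]
  rw [expect_prod_eq_pow fun c ↦ w c σ * v c τ, Fintype.card_fin, pairCorrelation]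

end Constraints

variable [Fintype S]

/-- The partition function of the `m`-tuple `F` of constraints, with the spin configuration `σ`
drawn uniformly from `S` and each constraint `c` contributing the factor `w c σ`. -/
noncomputable def partitionFunction (w : C → S → ℝ) (F : Fin m → C) : ℝ :=
  𝔼 σ, ∏ i, w (F i) σ

lemma partitionFunction_mul_partitionFunction (w v : C → S → ℝ) (F : Fin m → C) :
    partitionFunction w F * partitionFunction v F =
      𝔼 σ, 𝔼 τ, (∏ i, w (F i) σ) * ∏ i, v (F i) τ :=
  expect_mul_expect ..

lemma partitionFunction_cons (w : C → S → ℝ) (c : C) (F : Fin m → C) :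
    partitionFunction w (Fin.cons c F) = 𝔼 σ, w c σ * ∏ i, w (F i) σ := by
  simp [partitionFunction, Fin.prod_univ_succ]

lemma mul_partitionFunction_le_partitionFunction_cons {w : C → S → ℝ} {a : ℝ}
    (hw_nonneg : ∀ c σ, 0 ≤ w c σ) (hw : ∀ c σ, a ≤ w c σ) (c : C) (F : Fin m → C) :
    a * partitionFunction w F ≤ partitionFunction w (Fin.cons c F) := by
  rw [partitionFunction_cons, partitionFunction, mul_expect]
  exact expect_le_expect fun σ _ ↦
    mul_le_mul_of_nonneg_right (hw c σ) (prod_nonneg fun i _ ↦ hw_nonneg _ _)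

lemma partitionFunction_pos [Nonempty S] {w : C → S → ℝ} (hw : ∀ c σ, 0 < w c σ)
    (F : Fin m → C) : 0 < partitionFunction w F :=
  expect_pos (fun _ _ ↦ prod_pos fun _ _ ↦ hw _ _) univ_nonempty

variable [Fintype C]

/-- The two-replica partition function of `F`, tilted by the exponential of `M` times the change
`pairCorrelation w w - 1` that one further random constraint would make. -/
noncomputable def tiltedPairPartitionFunction (w : C → S → ℝ) (M : ℝ) (F : Fin m → C) : ℝ :=
  𝔼 σ, 𝔼 τ, (∏ i, w (F i) σ) * (∏ i, w (F i) τ) * exp (M * (pairCorrelation w w σ τ - 1))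

lemma expect_partitionFunction_mul_partitionFunction (w v : C → S → ℝ) :
    𝔼 F : Fin m → C, partitionFunction w F * partitionFunction v F =
      𝔼 σ, 𝔼 τ, pairCorrelation w v σ τ ^ m := by
  simp_rw [partitionFunction_mul_partitionFunction, expect_comm (s := (univ : Finset (Fin m → C))),
    expect_prod_mul_prod]

lemma expect_partitionFunction_sub_sq (f w : C → S → ℝ) :
    𝔼 F : Fin m → C, (partitionFunction f F - partitionFunction w F) ^ 2 =
      𝔼 σ, 𝔼 τ, (pairCorrelation f f σ τ ^ m - 2 * pairCorrelation f w σ τ ^ m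
        + pairCorrelation w w σ τ ^ m) := by
  simp_rw [sub_sq, pow_two (partitionFunction _ _), mul_assoc, expect_add_distrib,
    expect_sub_distrib, ← mul_expect, expect_partitionFunction_mul_partitionFunction]

lemma expect_tiltedPairPartitionFunction (w : C → S → ℝ) (M : ℝ) :
    𝔼 F : Fin m → C, tiltedPairPartitionFunction w M F =
      𝔼 σ, 𝔼 τ, pairCorrelation w w σ τ ^ m * exp (M * (pairCorrelation w w σ τ - 1)) := by
  simp_rw [tiltedPairPartitionFunction, expect_comm (s := (univ : Finset (Fin m → C))),
    ← expect_mul, expect_prod_mul_prod]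

lemma expect_partitionFunction_cons_sq (w : C → S → ℝ) (F : Fin m → C) :
    𝔼 c, partitionFunction w (Fin.cons c F) ^ 2 =
      𝔼 σ, 𝔼 τ, (∏ i, w (F i) σ) * (∏ i, w (F i) τ) * pairCorrelation w w σ τ := by
  simp_rw [partitionFunction_cons, sq, expect_mul_expect, expect_comm (s := (univ : Finset C)),
    pairCorrelation, mul_expect]
  refine expect_congr rfl fun σ _ ↦ expect_congr rfl fun τ _ ↦ expect_congr rfl fun c _ ↦ ?_
  ring

lemma expect_partitionFunction_cons {w : C → S → ℝ} (hw_mean : ∀ σ, 𝔼 c, w c σ = 1)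
    (F : Fin m → C) :
    𝔼 c, partitionFunction w (Fin.cons c F) = partitionFunction w F := by
  simp_rw [partitionFunction_cons, expect_comm (s := (univ : Finset C)), ← expect_mul, hw_mean,
    one_mul]
  rfl

lemma expect_partitionFunction_eq_one [Nonempty S] {w : C → S → ℝ}
    (hw_mean : ∀ σ, 𝔼 c, w c σ = 1) :
    𝔼 F : Fin m → C, partitionFunction w F = 1 := by
  simp_rw [partitionFunction, expect_comm (s := (univ : Finset (Fin m → C))),
    fun σ ↦ expect_prod_eq_pow (ι := Fin m) fun c ↦ w c σ, hw_mean, one_pow, Fintype.expect_const]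

lemma tiltedPairPartitionFunction_pos [Nonempty S] {w : C → S → ℝ} (hw : ∀ c σ, 0 < w c σ)
    (M : ℝ) (F : Fin m → C) : 0 < tiltedPairPartitionFunction w M F :=
  have hprod_pos (σ : S) : 0 < ∏ i, w (F i) σ := prod_pos fun _ _ ↦ hw _ _
  expect_pos (fun _ _ ↦ expect_pos (fun _ _ ↦ mul_pos (mul_pos (hprod_pos _) (hprod_pos _))
    (exp_pos _)) univ_nonempty) univ_nonempty

lemma expect_partitionFunction_cons_sq_div_sub_one_le [Nonempty S] {w : C → S → ℝ} {M : ℝ}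
    (hw : ∀ c σ, 0 < w c σ) (hM : 0 < M) (F : Fin m → C) :
    𝔼 c, (partitionFunction w (Fin.cons c F) / partitionFunction w F) ^ 2 - 1 ≤
      (log (tiltedPairPartitionFunction w M F) - 2 * log (partitionFunction w F)) / M := by
  have hZ : 0 < partitionFunction w F := partitionFunction_pos hw F
  have hprod_pos (σ : S) : 0 < ∏ i, w (F i) σ := prod_pos fun _ _ ↦ hw _ _
  have hpair (g : S → S → ℝ) : 𝔼 a : S × S, g a.1 a.2 = 𝔼 σ, 𝔼 τ, g σ τ :=
    expect_product' univ univ g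
  have hjensen := expect_mul_le_mul_log_expect_mul_exp
    (fun a : S × S ↦ (∏ i, w (F i) a.1) * ∏ i, w (F i) a.2)
    (fun a ↦ M * (pairCorrelation w w a.1 a.2 - 1)) fun a ↦ mul_pos (hprod_pos _) (hprod_pos _)
  rw [hpair fun σ τ ↦ (∏ i, w (F i) σ) * (∏ i, w (F i) τ) * (M * (pairCorrelation w w σ τ - 1)),
    hpair fun σ τ ↦ (∏ i, w (F i) σ) * ∏ i, w (F i) τ,
    hpair fun σ τ ↦ (∏ i, w (F i) σ) * (∏ i, w (F i) τ) *
      exp (M * (pairCorrelation w w σ τ - 1)),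
    ← partitionFunction_mul_partitionFunction, ← tiltedPairPartitionFunction, ← sq, log_pow,
    Nat.cast_ofNat] at hjensen
  have hincrement : 𝔼 σ, 𝔼 τ, (∏ i, w (F i) σ) * (∏ i, w (F i) τ) *
        (M * (pairCorrelation w w σ τ - 1)) = partitionFunction w F ^ 2 *
      (M * (𝔼 c, (partitionFunction w (Fin.cons c F) / partitionFunction w F) ^ 2 - 1)) := by
    simp_rw [mul_left_comm _ M, mul_sub_one, ← mul_expect, expect_sub_distrib,
      ← expect_partitionFunction_cons_sq, ← partitionFunction_mul_partitionFunction, div_pow,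
      ← expect_div]
    field_simp
  rw [hincrement] at hjensen
  rw [le_div_iff₀' hM]
  exact le_of_mul_le_mul_left hjensen (by positivity)

section BoundedBelow

variable [Nonempty C] [Nonempty S] {w : C → S → ℝ} {M B : ℝ}

lemma log_partitionFunction_sub_le_expect_log_cons
    (hw : ∀ c σ, 2 / 3 ≤ w c σ) (hw_mean : ∀ σ, 𝔼 c, w c σ = 1) (F : Fin m → C) :
    log (partitionFunction w F) -
        (𝔼 c, (partitionFunction w (Fin.cons c F) / partitionFunction w F) ^ 2 - 1) ≤
      𝔼 c, log (partitionFunction w (Fin.cons c F)) := by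
  have hw_pos (c : C) (σ : S) : 0 < w c σ := by linarith [hw c σ]
  have hZ : 0 < partitionFunction w F := partitionFunction_pos hw_pos F
  have hratio := one_sub_expect_sq_le_expect_log
    (fun c ↦ partitionFunction w (Fin.cons c F) / partitionFunction w F)
    (fun c ↦ (le_div_iff₀ hZ).2 <|
      mul_partitionFunction_le_partitionFunction_cons (fun c σ ↦ (hw_pos c σ).le) hw c F)
    (by rw [← expect_div, expect_partitionFunction_cons hw_mean, div_self hZ.ne'])
  simp_rw [fun c ↦ log_div (partitionFunction_pos hw_pos (Fin.cons c F)).ne' hZ.ne',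
    expect_sub_distrib, Fintype.expect_const] at hratio
  linarith

lemma neg_expect_log_partitionFunction_succ_le
    (hw : ∀ c σ, 2 / 3 ≤ w c σ) (hw_mean : ∀ σ, 𝔼 c, w c σ = 1) (hM : 0 < M)
    (hB : 𝔼 σ, 𝔼 τ, pairCorrelation w w σ τ ^ m * exp (M * (pairCorrelation w w σ τ - 1)) ≤
      exp B) :
    -𝔼 F : Fin (m + 1) → C, log (partitionFunction w F) ≤
      -𝔼 F : Fin m → C, log (partitionFunction w F) +
        (B + 2 * -𝔼 F : Fin m → C, log (partitionFunction w F)) / M := by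
  have hw_pos (c : C) (σ : S) : 0 < w c σ := by linarith [hw c σ]
  have hincrement (F : Fin m → C) :
      log (partitionFunction w F) -
          (log (tiltedPairPartitionFunction w M F) - 2 * log (partitionFunction w F)) / M ≤
        𝔼 c, log (partitionFunction w (Fin.cons c F)) := by
    linarith [expect_partitionFunction_cons_sq_div_sub_one_le hw_pos hM F,
      log_partitionFunction_sub_le_expect_log_cons hw hw_mean F]
  have htilted : 𝔼 F : Fin m → C, log (tiltedPairPartitionFunction w M F) ≤ B := by
    have hpos := tiltedPairPartitionFunction_pos (m := m) hw_pos M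
    refine (expect_log_le_log_expect _ hpos).trans ?_
    rw [log_le_iff_le_exp (expect_pos (fun F _ ↦ hpos F) univ_nonempty),
      expect_tiltedPairPartitionFunction]
    exact hB
  have haverage := expect_le_expect (s := univ) fun F _ ↦ hincrement F
  simp_rw [expect_sub_distrib, ← expect_div, expect_sub_distrib, ← mul_expect,
    ← expect_fin_succ_eq fun F ↦ log (partitionFunction w F)] at haverage
  have := div_le_div_of_nonneg_right htilted hM.le
  rw [sub_div] at haverage
  rw [add_div, mul_neg, neg_div]
  linarith

lemma neg_expect_log_partitionFunction_add_le
    (hw : ∀ c σ, 2 / 3 ≤ w c σ) (hw_mean : ∀ σ, 𝔼 c, w c σ = 1) (hM : 0 < M)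
    (hB : ∀ t < m, 𝔼 σ, 𝔼 τ, pairCorrelation w w σ τ ^ t *
      exp (M * (pairCorrelation w w σ τ - 1)) ≤ exp B) :
    -𝔼 F : Fin m → C, log (partitionFunction w F) + B / 2 ≤ (1 + 2 / M) ^ m * (B / 2) := by
  induction m with
  | zero => simp [partitionFunction]
  | succ t ih =>
    have hstep := neg_expect_log_partitionFunction_succ_le hw hw_mean hM (hB t t.lt_succ_self)
    set Φ := -𝔼 F : Fin t → C, log (partitionFunction w F)
    calc -𝔼 F : Fin (t + 1) → C, log (partitionFunction w F) + B / 2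
        ≤ Φ + (B + 2 * Φ) / M + B / 2 := by gcongr
      _ = (1 + 2 / M) * (Φ + B / 2) := by field_simp; ring
      _ ≤ (1 + 2 / M) * ((1 + 2 / M) ^ t * (B / 2)) := by
          gcongr
          exact ih fun s hs ↦ hB s (hs.trans t.lt_succ_self)
      _ = (1 + 2 / M) ^ (t + 1) * (B / 2) := by ring

end BoundedBelow

/-- If `x = 0` then either `y` is so small that `-log y` is large, or `x` and `y` are far apart. -/
lemma indicator_eq_zero_le {s x y : ℝ} (hs : 0 < s) (hy : 0 < y) :
    (if x = 0 then 1 else 0) ≤ (y - 1 - log y) / s + (x - y) ^ 2 * exp (2 * (s + 1)) := by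
  have hlog : 0 ≤ y - 1 - log y := by linarith [log_le_sub_one_of_pos hy]
  split_ifs with hx
  · subst hx
    rcases le_total y (exp (-(s + 1))) with hsmall | hlarge
    · have hlog_le : log y ≤ -(s + 1) := (log_le_iff_le_exp hy).2 hsmall
      have : 1 ≤ (y - 1 - log y) / s := (le_div_iff₀ hs).2 (by linarith)
      have : 0 ≤ (0 - y) ^ 2 * exp (2 * (s + 1)) := by positivity
      linarith
    · have : 1 ≤ y * exp (s + 1) := by
        rwa [exp_neg, inv_le_iff_one_le_mul₀ (exp_pos _)] at hlarge
      have : 1 ≤ (0 - y) ^ 2 * exp (2 * (s + 1)) := by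
        rw [zero_sub, neg_sq, two_mul, exp_add, ← sq, ← mul_pow]
        exact one_le_pow₀ this
      have : 0 ≤ (y - 1 - log y) / s := div_nonneg hlog hs.le
      linarith
  · positivity

lemma card_partitionFunction_eq_zero_div_le [Nonempty C] [Nonempty S] {f w : C → S → ℝ}
    {s : ℝ} (hw : ∀ c σ, 0 < w c σ) (hw_mean : ∀ σ, 𝔼 c, w c σ = 1) (hs : 0 < s) :
    (#{F : Fin m → C | partitionFunction f F = 0} : ℝ) / Fintype.card (Fin m → C) ≤
      (-𝔼 F : Fin m → C, log (partitionFunction w F)) / s +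
        (𝔼 F : Fin m → C, (partitionFunction f F - partitionFunction w F) ^ 2) *
          exp (2 * (s + 1)) := by
  rw [natCast_card_filter, ← Fintype.expect_eq_sum_div_card]
  refine (expect_le_expect fun F _ ↦
    indicator_eq_zero_le hs (partitionFunction_pos hw F)).trans_eq ?_
  rw [expect_add_distrib, ← expect_div, ← expect_mul, expect_sub_distrib, expect_sub_distrib,
    expect_partitionFunction_eq_one hw_mean, Fintype.expect_const]
  ring

end PartitionFunction

section Spins

/-- The `±1` spin encoding a Boolean value. -/
def spin (b : Bool) : ℝ := if b then 1 else -1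

lemma spin_true : spin true = 1 := if_pos rfl

lemma spin_false : spin false = -1 := if_neg Bool.false_ne_true

lemma spin_mul_spin (a b : Bool) : spin a * spin b = spin (a == b) := by
  cases a <;> cases b <;> simp [spin_true, spin_false]

lemma abs_spin (b : Bool) : |spin b| = 1 := by cases b <;> simp [spin_true, spin_false]

variable {V : Type*} {k : ℕ}

/-- The spin of a literal under an assignment: `1` if the literal is satisfied, else `-1`. -/
def literalSpin (l : V × Bool) (σ : V → Bool) : ℝ := spin l.2 * spin (σ l.1)

lemma literalSpin_eq_one_of_satisfied {l : V × Bool} {σ : V → Bool} (h : σ l.1 = l.2) :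
    literalSpin l σ = 1 := by
  rw [literalSpin, spin_mul_spin, h, beq_self_eq_true, spin_true]

lemma literalSpin_eq_neg_one_of_not_satisfied {l : V × Bool} {σ : V → Bool} (h : σ l.1 ≠ l.2) :
    literalSpin l σ = -1 := by
  rw [literalSpin, spin_mul_spin, beq_false_of_ne h.symm, spin_false]

lemma abs_literalSpin (l : V × Bool) (σ : V → Bool) : |literalSpin l σ| = 1 := by
  rw [literalSpin, spin_mul_spin, abs_spin]

/-- The even part of `(1 + u) ^ k`, minus its constant term. -/
noncomputable def evenExcess (k : ℕ) (u : ℝ) : ℝ := ((1 + u) ^ k + (1 - u) ^ k) / 2 - 1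

/-- The even part in the literal spins of `∏ i, (1 + y i / p)`, minus its constant term. For `p = 1`
it equals `2 ^ (k - 1) - 1` if the `k` literals are all equal under `σ`, and `-1` otherwise. -/
noncomputable def clauseExcess (p : ℝ) (c : Fin k → V × Bool) (σ : V → Bool) : ℝ :=
  (∏ i, (1 + literalSpin (c i) σ / p) + ∏ i, (1 - literalSpin (c i) σ / p)) / 2 - 1

/-- The weight of an ordered clause at inverse smoothing `p`. The choice of `β` in `naeBias` makes
`p = 1` a multiple of the indicator that the clause is NAE-satisfied. The factor `p ^ 2` makes the
term of second order in the literal spins independent of `p`. -/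
noncomputable def clauseWeight (β p : ℝ) (c : Fin k → V × Bool) (σ : V → Bool) : ℝ :=
  1 - β * p ^ 2 * clauseExcess p c σ

/-- The correlation of clause weights as a function of the overlap of the two assignments. -/
noncomputable def overlapKernel (k : ℕ) (β p x : ℝ) : ℝ := 1 + β ^ 2 * p ^ 2 * evenExcess k (x / p)

/-- The value of `β` for which `clauseWeight β 1` vanishes on clauses that are not
NAE-satisfied. -/
noncomputable def naeBias (k : ℕ) : ℝ := 1 / (2 ^ (k - 1) - 1)

lemma prod_one_add_le_exp_sum_abs {ι : Type*} (s : Finset ι) (y : ι → ℝ) :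
    ∏ i ∈ s, (1 + y i) ≤ exp (∑ i ∈ s, |y i|) :=
  calc ∏ i ∈ s, (1 + y i) ≤ ∏ i ∈ s, |1 + y i| := (le_abs_self _).trans_eq (abs_prod ..)
    _ ≤ ∏ i ∈ s, (1 + |y i|) :=
        prod_le_prod (fun _ _ ↦ abs_nonneg _) fun i _ ↦ by simpa using abs_add_le 1 (y i)
    _ ≤ exp (∑ i ∈ s, |y i|) := prod_one_add_le_exp_sum s fun i ↦ abs_nonneg (y i)

lemma two_thirds_le_clauseWeight {β : ℝ} (hβ : 0 ≤ β) (hβk : β * k ^ 2 ≤ 1 / 6)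
    (c : Fin k → V × Bool) (σ : V → Bool) : 2 / 3 ≤ clauseWeight β k c σ := by
  have hsum : ∑ i, |literalSpin (c i) σ / k| ≤ 1 := by
    simpa [abs_div, abs_literalSpin] using mul_inv_le_one
  have hplus := (prod_one_add_le_exp_sum_abs univ _).trans (exp_le_exp.2 hsum)
  have hminus := (prod_one_add_le_exp_sum_abs univ fun i ↦ -(literalSpin (c i) σ / k)).trans
    (exp_le_exp.2 (by simpa only [abs_neg] using hsum))
  have hexcess : clauseExcess k c σ ≤ 2 := by
    simp only [← sub_eq_add_neg] at hminus
    rw [clauseExcess]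
    linarith [exp_one_lt_d9]
  rw [clauseWeight]
  nlinarith [mul_nonneg hβ (sq_nonneg (k : ℝ))]

lemma clauseWeight_naeBias_eq_zero (hk : 2 ≤ k) {c : Fin k → V × Bool} {σ : V → Bool}
    (h : (∀ i, literalSpin (c i) σ = 1) ∨ ∀ i, literalSpin (c i) σ = -1) :
    clauseWeight (naeBias k) 1 c σ = 0 := by
  obtain ⟨j, rfl⟩ := Nat.exists_eq_add_of_le' hk
  have hpow : (1 : ℝ) < 2 ^ (j + 1) := one_lt_pow₀ one_lt_two j.succ_ne_zero
  have hne : (2 : ℝ) ^ (j + 1) - 1 ≠ 0 := by linarith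
  have hexcess : clauseExcess 1 c σ = 2 ^ (j + 1) - 1 := by
    rcases h with h | h <;> simp [clauseExcess, h, one_add_one_eq_two] <;> ring
  rw [clauseWeight, naeBias, hexcess, show j + 2 - 1 = j + 1 from rfl]
  field_simp
  ring

variable [Fintype V]

/-- The mean spin of an assignment. -/
noncomputable def magnetization (z : V → Bool) : ℝ := 𝔼 v, spin (z v)

/-- The overlap of two assignments: agreement fraction minus disagreement fraction. -/
noncomputable def overlap (σ τ : V → Bool) : ℝ := 𝔼 v, spin (σ v) * spin (τ v)

lemma expect_overlap_eq_expect_magnetization [DecidableEq V] (g : ℝ → ℝ) :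
    𝔼 σ : V → Bool, 𝔼 τ : V → Bool, g (overlap σ τ) = 𝔼 z : V → Bool, g (magnetization z) := by
  have hinvolutive (σ : V → Bool) : Function.Involutive fun (τ : V → Bool) v ↦ σ v == τ v := by
    intro τ
    ext v
    simp
  have hshift (σ : V → Bool) :
      𝔼 τ : V → Bool, g (overlap σ τ) = 𝔼 z : V → Bool, g (magnetization z) :=
    Fintype.expect_equiv (hinvolutive σ).toPerm _ _ fun τ ↦ by
      simp only [overlap, magnetization, spin_mul_spin, Function.Involutive.coe_toPerm]
  simp only [hshift, Fintype.expect_const]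

variable [Nonempty V]

lemma expect_literal_one_add_mul_one_add (σ τ : V → Bool) (a b : ℝ) :
    𝔼 l : V × Bool, (1 + a * literalSpin l σ) * (1 + b * literalSpin l τ) =
      1 + a * b * overlap σ τ := by
  have hsign (v : V) : 𝔼 s, (1 + a * literalSpin (v, s) σ) * (1 + b * literalSpin (v, s) τ) =
      1 + a * b * (spin (σ v) * spin (τ v)) := by
    simp only [Fintype.expect_eq_sum_div_card, Fintype.sum_bool, Fintype.card_bool, literalSpin,
      spin_true, spin_false]
    norm_num
    ring
  rw [← univ_product_univ,
    expect_product' univ univ fun v s ↦ (1 + a * literalSpin (v, s) σ) *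
      (1 + b * literalSpin (v, s) τ)]
  simp_rw [hsign, expect_add_distrib, ← mul_expect, Fintype.expect_const, overlap]

lemma expect_clause_prod_mul_prod (σ τ : V → Bool) (a b : ℝ) :
    𝔼 c : Fin k → V × Bool,
        (∏ i, (1 + a * literalSpin (c i) σ)) * ∏ i, (1 + b * literalSpin (c i) τ) =
      (1 + a * b * overlap σ τ) ^ k := by
  simp_rw [← prod_mul_distrib]
  rw [expect_prod_eq_pow fun l ↦ (1 + a * literalSpin l σ) * (1 + b * literalSpin l τ),
    expect_literal_one_add_mul_one_add, Fintype.card_fin]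

lemma expect_clause_prod (σ : V → Bool) (a : ℝ) :
    𝔼 c : Fin k → V × Bool, ∏ i, (1 + a * literalSpin (c i) σ) = 1 := by
  simpa using expect_clause_prod_mul_prod (k := k) σ σ a 0

lemma expect_clauseExcess (p : ℝ) (σ : V → Bool) :
    𝔼 c : Fin k → V × Bool, clauseExcess p c σ = 0 := by
  simp_rw [clauseExcess, sub_eq_add_neg (1 : ℝ), div_eq_inv_mul _ p, ← neg_mul, expect_sub_distrib,
    ← expect_div, expect_add_distrib, expect_clause_prod, Fintype.expect_const]
  norm_num

lemma expect_clauseExcess_mul_clauseExcess (p q : ℝ) (σ τ : V → Bool) :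
    𝔼 c : Fin k → V × Bool, clauseExcess p c σ * clauseExcess q c τ =
      evenExcess k (overlap σ τ / (p * q)) := by
  let prodAt (a : ℝ) (ρ : V → Bool) (c : Fin k → V × Bool) : ℝ :=
    ∏ i, (1 + a * literalSpin (c i) ρ)
  have hprod (a b : ℝ) : 𝔼 c, prodAt a σ c * prodAt b τ c = (1 + a * b * overlap σ τ) ^ k :=
    expect_clause_prod_mul_prod σ τ a b
  have hexcess (r : ℝ) (ρ : V → Bool) (c : Fin k → V × Bool) :
      clauseExcess r c ρ = (prodAt r⁻¹ ρ c + prodAt (-r⁻¹) ρ c) / 2 - 1 := by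
    simp only [clauseExcess, prodAt, neg_mul, ← sub_eq_add_neg, div_eq_inv_mul]
  have hcenter : 𝔼 c : Fin k → V × Bool, clauseExcess p c σ * clauseExcess q c τ =
      𝔼 c : Fin k → V × Bool, (clauseExcess p c σ + 1) * (clauseExcess q c τ + 1) - 1 := by
    simp only [add_mul, mul_add, one_mul, mul_one, expect_add_distrib, expect_clauseExcess,
      Fintype.expect_const]
    ring
  have hexpand (c : Fin k → V × Bool) :
      (clauseExcess p c σ + 1) * (clauseExcess q c τ + 1) =
        (prodAt p⁻¹ σ c * prodAt q⁻¹ τ c + prodAt p⁻¹ σ c * prodAt (-q⁻¹) τ c +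
          prodAt (-p⁻¹) σ c * prodAt q⁻¹ τ c + prodAt (-p⁻¹) σ c * prodAt (-q⁻¹) τ c) / 4 := by
    rw [hexcess, hexcess]
    ring
  rw [hcenter]
  simp_rw [hexpand, ← expect_div, expect_add_distrib, hprod]
  rw [evenExcess, div_eq_inv_mul (overlap σ τ), mul_inv]
  ring

lemma expect_clauseWeight (β p : ℝ) (σ : V → Bool) :
    𝔼 c : Fin k → V × Bool, clauseWeight β p c σ = 1 := by
  simp_rw [clauseWeight, expect_sub_distrib, ← mul_expect, expect_clauseExcess,
    Fintype.expect_const, mul_zero, sub_zero]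

lemma pairCorrelation_clauseWeight (β p q : ℝ) (σ τ : V → Bool) :
    pairCorrelation (clauseWeight (k := k) β p) (clauseWeight β q) σ τ =
      overlapKernel k β (p * q) (overlap σ τ) := by
  have hexpand (c : Fin k → V × Bool) : clauseWeight β p c σ * clauseWeight β q c τ =
      1 - β * p ^ 2 * clauseExcess p c σ - β * q ^ 2 * clauseExcess q c τ +
        β ^ 2 * (p * q) ^ 2 * (clauseExcess p c σ * clauseExcess q c τ) := by
    rw [clauseWeight, clauseWeight]
    ring
  simp_rw [pairCorrelation, hexpand, expect_add_distrib, expect_sub_distrib, ← mul_expect,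
    expect_clauseExcess, expect_clauseExcess_mul_clauseExcess, Fintype.expect_const]
  rw [overlapKernel]
  ring

end Spins

section Subgaussian

lemma exp_neg_sq_add_mul_eq (a u : ℝ) :
    exp (-u ^ 2 + u * a) = exp (-1 * (u - a / 2) ^ 2) * exp (a ^ 2 / 4) := by
  rw [← exp_add]
  ring_nf

lemma integrable_exp_neg_sq_add_mul (a : ℝ) :
    MeasureTheory.Integrable fun u : ℝ ↦ exp (-u ^ 2 + u * a) := by
  simp_rw [exp_neg_sq_add_mul_eq a]
  exact ((integrable_exp_neg_mul_sq one_pos).comp_sub_right (a / 2)).mul_const _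

lemma integral_exp_neg_sq_add_mul (a : ℝ) :
    ∫ u : ℝ, exp (-u ^ 2 + u * a) = √π * exp (a ^ 2 / 4) := by
  simp_rw [exp_neg_sq_add_mul_eq a]
  rw [MeasureTheory.integral_mul_const,
    MeasureTheory.integral_sub_right_eq_self fun u : ℝ ↦ exp (-1 * u ^ 2), integral_gaussian,
    div_one]

variable {Ω : Type*} [Fintype Ω]

lemma expect_exp_sq_div_four_le_sqrt_two (X : Ω → ℝ)
    (hX : ∀ u, 𝔼 ω, exp (u * X ω) ≤ exp (u ^ 2 / 2)) : 𝔼 ω, exp (X ω ^ 2 / 4) ≤ √2 := by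
  have hintegral : ∫ u : ℝ, 𝔼 ω, exp (-u ^ 2 + u * X ω) = √π * 𝔼 ω, exp (X ω ^ 2 / 4) := by
    simp only [Fintype.expect_eq_sum_div_card]
    rw [MeasureTheory.integral_div,
      MeasureTheory.integral_finsetSum _ fun ω _ ↦ integrable_exp_neg_sq_add_mul (X ω)]
    simp only [integral_exp_neg_sq_add_mul, ← mul_sum, mul_div_assoc]
  have hintegrable : MeasureTheory.Integrable fun u : ℝ ↦ 𝔼 ω, exp (-u ^ 2 + u * X ω) := by
    simp only [Fintype.expect_eq_sum_div_card]
    exact (MeasureTheory.integrable_finsetSum _ fun ω _ ↦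
      integrable_exp_neg_sq_add_mul (X ω)).div_const _
  have hpointwise (u : ℝ) : 𝔼 ω, exp (-u ^ 2 + u * X ω) ≤ exp (-(1 / 2) * u ^ 2) := by
    simp_rw [exp_add, ← mul_expect]
    calc exp (-u ^ 2) * 𝔼 ω, exp (u * X ω) ≤ exp (-u ^ 2) * exp (u ^ 2 / 2) := by gcongr; exact hX u
      _ = exp (-(1 / 2) * u ^ 2) := by rw [← exp_add]; ring_nf
  have hle : √π * 𝔼 ω, exp (X ω ^ 2 / 4) ≤ √π * √2 :=
    calc √π * 𝔼 ω, exp (X ω ^ 2 / 4) = ∫ u : ℝ, 𝔼 ω, exp (-u ^ 2 + u * X ω) := hintegral.symm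
      _ ≤ ∫ u : ℝ, exp (-(1 / 2) * u ^ 2) :=
          MeasureTheory.integral_mono hintegrable (integrable_exp_neg_mul_sq one_half_pos)
            hpointwise
      _ = √π * √2 := by rw [integral_gaussian, ← sqrt_mul pi_pos.le]; norm_num
  exact le_of_mul_le_mul_left hle (sqrt_pos.2 pi_pos)

end Subgaussian

section Magnetization

variable {V : Type*} [Fintype V]

lemma magnetization_eq [Nonempty V] (z : V → Bool) :
    magnetization z = 2 * (#{v | z v = true} / Fintype.card V) - 1 := by
  have hspin (v : V) : spin (z v) = 2 * (if z v = true then 1 else 0) - 1 := by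
    rw [spin]
    split_ifs <;> norm_num
  simp_rw [magnetization, hspin, expect_sub_distrib, ← mul_expect, Fintype.expect_const,
    Fintype.expect_eq_sum_div_card, sum_boole]

lemma abs_magnetization_le_one (z : V → Bool) : |magnetization z| ≤ 1 :=
  (abs_expect_le _ _).trans <| by
    simp_rw [abs_spin]
    cases isEmpty_or_nonempty V <;> simp

variable [DecidableEq V]

lemma sum_card_true_eq_sum_choose (f : ℕ → ℝ) :
    ∑ z : V → Bool, f #{v | z v = true} =
      ∑ j ∈ range (Fintype.card V + 1), (Fintype.card V).choose j * f j := by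
  have hsupport : ∑ z : V → Bool, f #{v | z v = true} = ∑ s : Finset V, f #s :=
    sum_bij' (fun z _ ↦ ({v | z v = true} : Finset V)) (fun s _ v ↦ decide (v ∈ s))
      (by simp) (by simp) (by simp) (by simp) (by simp)
  rw [hsupport, ← powerset_univ, sum_powerset_apply_card, card_univ]
  simp only [nsmul_eq_mul]

lemma expect_exp_mul_magnetization_le (a : ℝ) :
    𝔼 z : V → Bool, exp (a * magnetization z) ≤ exp (a ^ 2 / (2 * Fintype.card V)) := by
  set n := Fintype.card V with hn
  have hfactor (z : V → Bool) : exp (a * magnetization z) = ∏ v, exp (a / n * spin (z v)) := by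
    rw [magnetization, Fintype.expect_eq_sum_div_card, ← hn, ← exp_sum, ← mul_sum]
    ring_nf
  have hcosh : 𝔼 b, exp (a / n * spin b) = cosh (a / n) := by
    rw [cosh_eq, Fintype.expect_eq_sum_div_card]
    simp [spin_true, spin_false]
  simp_rw [hfactor]
  rw [expect_prod_eq_pow fun b ↦ exp (a / n * spin b), hcosh, ← hn]
  calc cosh (a / n) ^ n ≤ exp ((a / n) ^ 2 / 2) ^ n :=
        pow_le_pow_left₀ (cosh_pos _).le (cosh_le_exp_half_sq _) n
    _ = exp (a ^ 2 / (2 * n)) := by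
        rw [← exp_nat_mul]
        congr 1
        rcases n.eq_zero_or_pos with h | h
        · simp [h]
        · field_simp

lemma expect_exp_card_mul_magnetization_sq_le [Nonempty V] :
    𝔼 z : V → Bool, exp (Fintype.card V * magnetization z ^ 2 / 4) ≤ √2 := by
  have hn : (0 : ℝ) < Fintype.card V := Nat.cast_pos.2 Fintype.card_pos
  have hmgf (u : ℝ) :
      𝔼 z : V → Bool, exp (u * (√(Fintype.card V) * magnetization z)) ≤ exp (u ^ 2 / 2) := by
    simp_rw [← mul_assoc]
    refine (expect_exp_mul_magnetization_le _).trans_eq ?_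
    rw [mul_pow, sq_sqrt hn.le]
    field_simp
  simpa only [mul_pow, sq_sqrt hn.le] using expect_exp_sq_div_four_le_sqrt_two _ hmgf

end Magnetization

section EntropyBounds

lemma pow_mul_one_sub_pow_eq_exp_neg_binEntropy {n j : ℕ} (hj : 0 < j) (hjn : j < n) :
    ((j : ℝ) / n) ^ j * (1 - (j : ℝ) / n) ^ (n - j) = exp (-(n * binEntropy (j / n))) := by
  have hn : (0 : ℝ) < n := Nat.cast_pos.2 (hj.trans hjn)
  have hp : (0 : ℝ) < j / n := div_pos (Nat.cast_pos.2 hj) hn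
  have hp' : (0 : ℝ) < 1 - j / n := sub_pos.2 ((div_lt_one hn).2 (Nat.cast_lt.2 hjn))
  have hpow (x : ℝ) (hx : 0 < x) (i : ℕ) : x ^ i = exp (i * log x) := by
    rw [exp_nat_mul, exp_log hx]
  rw [hpow _ hp, hpow _ hp', ← exp_add, Nat.cast_sub hjn.le, binEntropy, log_inv, log_inv]
  congr 1
  field_simp
  ring

lemma choose_le_exp_binEntropy {n j : ℕ} (hj : j ≤ n) :
    (n.choose j : ℝ) ≤ exp (n * binEntropy (j / n)) := by
  rcases j.eq_zero_or_pos with rfl | hj_pos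
  · simp
  rcases hj.eq_or_lt with rfl | hj_lt
  · simp [div_self (Nat.cast_ne_zero.2 hj_pos.ne' : (j : ℝ) ≠ 0)]
  have hn : (0 : ℝ) < n := Nat.cast_pos.2 (hj_pos.trans hj_lt)
  have hp : (j : ℝ) / n ≤ 1 := (div_le_one hn).2 (Nat.cast_le.2 hj)
  have hterm : (j / n : ℝ) ^ j * (1 - (j : ℝ) / n) ^ (n - j) * n.choose j ≤ 1 := by
    have hbinom := add_pow ((j : ℝ) / n) (1 - (j : ℝ) / n) n
    rw [add_sub_cancel, one_pow] at hbinom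
    refine le_of_le_of_eq ?_ hbinom.symm
    exact single_le_sum (f := fun i ↦ (j / n : ℝ) ^ i * (1 - (j : ℝ) / n) ^ (n - i) * n.choose i)
      (fun i _ ↦ by have := sub_nonneg.2 hp; positivity) (mem_range.2 (Nat.lt_succ_of_le hj))
  rwa [pow_mul_one_sub_pow_eq_exp_neg_binEntropy hj_pos hj_lt, exp_neg, inv_mul_le_one₀ (exp_pos _)]
    at hterm

lemma expect_magnetization_le_of_le_exp {V : Type*} [Fintype V] [DecidableEq V] [Nonempty V]
    (g : ℝ → ℝ) (δ : ℝ) (hg : ∀ x, -1 ≤ x → x ≤ 1 →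
      g x ≤ exp (Fintype.card V * (log 2 - binEntropy ((1 + x) / 2) - δ))) :
    𝔼 z : V → Bool, g (magnetization z) ≤
      (Fintype.card V + 1) * exp (-(δ * Fintype.card V)) := by
  set n := Fintype.card V
  have hn : (0 : ℝ) < n := Nat.cast_pos.2 Fintype.card_pos
  have hcard : (Fintype.card (V → Bool) : ℝ) = exp (n * log 2) := by
    rw [exp_nat_mul, exp_log two_pos, Fintype.card_fun, Fintype.card_bool, Nat.cast_pow,
      Nat.cast_two]
  have hterm (j : ℕ) (hj : j ∈ range (n + 1)) :
      n.choose j * g (2 * (j / n) - 1) ≤ exp (-(δ * n)) * exp (n * log 2) := by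
    have hj' : j ≤ n := Nat.lt_succ_iff.1 (mem_range.1 hj)
    have hj_nonneg : (0 : ℝ) ≤ j / n := by positivity
    have hj_le : (j : ℝ) / n ≤ 1 := (div_le_one hn).2 (Nat.cast_le.2 hj')
    have hgj := hg (2 * (j / n) - 1) (by linarith) (by linarith)
    rw [add_sub_cancel, mul_div_cancel_left₀ _ two_ne_zero] at hgj
    calc n.choose j * g (2 * (j / n) - 1)
        ≤ n.choose j * exp (n * (log 2 - binEntropy (j / n) - δ)) := by gcongr
      _ ≤ exp (n * binEntropy (j / n)) * exp (n * (log 2 - binEntropy (j / n) - δ)) := by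
          gcongr
          exact choose_le_exp_binEntropy hj'
      _ = exp (-(δ * n)) * exp (n * log 2) := by
          rw [← exp_add, ← exp_add]
          ring_nf
  simp_rw [magnetization_eq, Fintype.expect_eq_sum_div_card]
  rw [sum_card_true_eq_sum_choose fun j ↦ g (2 * (j / n) - 1), hcard, div_le_iff₀ (exp_pos _)]
  refine (sum_le_sum hterm).trans_eq ?_
  simp [mul_assoc]

end EntropyBounds

section EvenExcess

variable {k : ℕ} {u : ℝ}

lemma one_add_pow_le_exp_mul (k : ℕ) (hu : -1 ≤ u) : (1 + u) ^ k ≤ exp (k * u) := by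
  rw [exp_nat_mul]
  exact pow_le_pow_left₀ (by linarith) (by linarith [add_one_le_exp u]) k

lemma evenExcess_nonneg (k : ℕ) (hu : |u| ≤ 1) : 0 ≤ evenExcess k u := by
  obtain ⟨hu_lower, hu_upper⟩ := abs_le.1 hu
  have hplus := one_add_mul_le_pow (show -2 ≤ u by linarith) k
  have hminus := one_add_mul_le_pow (show -2 ≤ -u by linarith) k
  rw [← sub_eq_add_neg] at hminus
  rw [evenExcess]
  linarith

lemma evenExcess_abs (k : ℕ) (u : ℝ) : evenExcess k |u| = evenExcess k u := by
  rcases abs_choice u with h | h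
  · rw [h]
  · rw [h, evenExcess, evenExcess, sub_neg_eq_add, ← sub_eq_add_neg, add_comm]

lemma continuous_evenExcess (k : ℕ) : Continuous (evenExcess k) := by
  unfold evenExcess
  fun_prop

lemma evenExcess_le_sq (hu : |u| ≤ 1) (hku : |k * u| ≤ 1) : evenExcess k u ≤ (k * u) ^ 2 := by
  obtain ⟨hu_lower, hu_upper⟩ := abs_le.1 hu
  have hplus := one_add_pow_le_exp_mul k hu_lower
  have hminus := one_add_pow_le_exp_mul k (neg_le_neg hu_upper)
  have hcosh : evenExcess k u ≤ cosh (k * u) - 1 := by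
    rw [mul_neg, ← sub_eq_add_neg] at hminus
    rw [evenExcess, cosh_eq]
    linarith
  have hsq : |(k * u) ^ 2 / 2| ≤ 1 := by
    rw [abs_of_nonneg (by positivity), ← sq_abs]
    linarith [pow_le_one₀ (n := 2) (abs_nonneg (k * u)) hku]
  have hexp := (abs_le.1 (abs_exp_sub_one_le hsq)).2
  rw [abs_of_nonneg (by positivity)] at hexp
  linarith [cosh_le_exp_half_sq (k * u)]

/-- The `j`-th term of `evenExcess k u - k.choose 2 * u ^ 2`, without its binomial coefficient. -/
noncomputable def evenRemainder (u : ℝ) (j : ℕ) : ℝ :=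
  (u ^ j + (-u) ^ j) / 2 - (if j = 0 then 1 else 0) - (if j = 2 then u ^ 2 else 0)

lemma evenExcess_sub_eq_sum_evenRemainder (k : ℕ) (u : ℝ) :
    evenExcess k u - k.choose 2 * u ^ 2 = ∑ j ∈ range (k + 1), evenRemainder u j * k.choose j := by
  have hplus := add_pow u 1 k
  have hminus := add_pow (-u) 1 k
  have hconst : ∑ j ∈ range (k + 1), (if j = 0 then (1 : ℝ) else 0) * k.choose j = 1 := by
    simp [ite_mul, sum_ite_eq']
  have hsq : ∑ j ∈ range (k + 1), (if j = 2 then u ^ 2 else 0) * k.choose j =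
      k.choose 2 * u ^ 2 := by
    rcases lt_or_ge k 2 with hk | hk
    · simp [ite_mul, sum_ite_eq', Nat.choose_eq_zero_of_lt hk]
    · simp [sum_ite_eq', show 2 < k + 1 by omega, mul_comm]
  simp only [one_pow, mul_one] at hplus hminus
  simp only [evenRemainder, sub_mul, sum_sub_distrib, hconst, hsq, div_mul_eq_mul_div, add_mul,
    ← sum_div, sum_add_distrib, ← hplus, ← hminus]
  rw [evenExcess, add_comm 1 u, sub_eq_neg_add 1 u]

lemma abs_evenRemainder_le (hu : |u| ≤ 1) (j : ℕ) : |evenRemainder u j| ≤ u ^ 4 := by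
  have hu4 : 0 ≤ u ^ 4 := by positivity
  match j with
  | 0 | 1 | 2 => simpa [evenRemainder] using hu4
  | 3 =>
    have hodd : (-u) ^ 3 = -u ^ 3 := by ring
    simpa [evenRemainder, hodd] using hu4
  | j + 4 =>
    have hpow (v : ℝ) (hv : |v| = |u|) : |v ^ (j + 4)| ≤ u ^ 4 := by
      rw [abs_pow, hv, ← Even.pow_abs (by decide) u]
      exact pow_le_pow_of_le_one (abs_nonneg u) hu (by omega)
    have hadd := (abs_add_le (u ^ (j + 4)) ((-u) ^ (j + 4))).trans
      (add_le_add (hpow u rfl) (hpow (-u) (abs_neg u)))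
    simp only [evenRemainder, Nat.add_eq_zero_iff, OfNat.ofNat_ne_zero, and_false, if_false,
      show j + 4 ≠ 2 by omega, sub_zero, abs_div, abs_two]
    linarith

lemma abs_evenExcess_sub_le (k : ℕ) (hu : |u| ≤ 1) :
    |evenExcess k u - k.choose 2 * u ^ 2| ≤ 2 ^ k * u ^ 4 := by
  rw [evenExcess_sub_eq_sum_evenRemainder]
  calc |∑ j ∈ range (k + 1), evenRemainder u j * k.choose j|
      ≤ ∑ j ∈ range (k + 1), |evenRemainder u j * k.choose j| := abs_sum_le_sum_abs _ _
    _ ≤ ∑ j ∈ range (k + 1), k.choose j * u ^ 4 := by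
        refine sum_le_sum fun j _ ↦ ?_
        rw [abs_mul, Nat.abs_cast, mul_comm]
        gcongr
        exact abs_evenRemainder_le hu j
    _ = 2 ^ k * u ^ 4 := by
        rw [← sum_mul, ← Nat.cast_sum, Nat.sum_range_choose, Nat.cast_pow, Nat.cast_two]

end EvenExcess

section OverlapKernel

variable {k : ℕ} {p q x : ℝ}

lemma abs_div_le_one_of_one_le (hp : 1 ≤ p) (hx : |x| ≤ 1) : |x / p| ≤ 1 := by
  rw [abs_div, abs_of_pos (one_pos.trans_le hp)]
  exact div_le_one_of_le₀ (hx.trans hp) (one_pos.trans_le hp).le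

lemma one_le_overlapKernel (k : ℕ) (β : ℝ) (hp : 1 ≤ p) (hx : |x| ≤ 1) :
    1 ≤ overlapKernel k β p x :=
  le_add_of_nonneg_right <| mul_nonneg (by positivity) <|
    evenExcess_nonneg k (abs_div_le_one_of_one_le hp hx)

lemma overlapKernel_le (β : ℝ) (hp : 1 ≤ p) (hx : |x| ≤ 1) (hkx : k * |x| ≤ p) :
    overlapKernel k β p x ≤ 1 + β ^ 2 * k ^ 2 * x ^ 2 := by
  have hp0 : 0 < p := one_pos.trans_le hp
  have hkxp : |k * (x / p)| ≤ 1 := by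
    rwa [← mul_div_assoc, abs_div, abs_of_pos hp0, div_le_one hp0, abs_mul, Nat.abs_cast]
  calc overlapKernel k β p x ≤ 1 + β ^ 2 * p ^ 2 * (k * (x / p)) ^ 2 := by
        rw [overlapKernel]
        gcongr
        exact evenExcess_le_sq (abs_div_le_one_of_one_le hp hx) hkxp
    _ = 1 + β ^ 2 * k ^ 2 * x ^ 2 := by field_simp

lemma overlapKernel_le_exp (β : ℝ) (hp : 1 ≤ p) (hx : |x| ≤ 1) (hkx : k * |x| ≤ p) :
    overlapKernel k β p x ≤ exp (β ^ 2 * k ^ 2 * x ^ 2) := by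
  linarith [add_one_le_exp (β ^ 2 * k ^ 2 * x ^ 2), overlapKernel_le β hp hx hkx]

lemma abs_overlapKernel_sub_le (k : ℕ) (β : ℝ) (hp : 1 ≤ p) (hx : |x| ≤ 1) :
    |overlapKernel k β p x - (1 + β ^ 2 * k.choose 2 * x ^ 2)| ≤ β ^ 2 * 2 ^ k * x ^ 4 := by
  have hscale : overlapKernel k β p x - (1 + β ^ 2 * k.choose 2 * x ^ 2) =
      β ^ 2 * p ^ 2 * (evenExcess k (x / p) - k.choose 2 * (x / p) ^ 2) := by
    rw [overlapKernel]
    field_simp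
    ring
  rw [hscale, abs_mul, abs_of_nonneg (by positivity)]
  calc β ^ 2 * p ^ 2 * |evenExcess k (x / p) - k.choose 2 * (x / p) ^ 2|
      ≤ β ^ 2 * p ^ 2 * (2 ^ k * (x / p) ^ 4) := by
        gcongr
        exact abs_evenExcess_sub_le k (abs_div_le_one_of_one_le hp hx)
    _ = β ^ 2 * 2 ^ k * x ^ 4 / p ^ 2 := by field_simp
    _ ≤ β ^ 2 * 2 ^ k * x ^ 4 := div_le_self (by positivity) (one_le_pow₀ hp)

lemma overlapKernel_pow_le_exp {β κ n : ℝ} {m : ℕ} (hp : 1 ≤ p) (hx : |x| ≤ 1)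
    (hkx : k * |x| ≤ p) (hm : m * (β ^ 2 * k ^ 2) ≤ κ * n) :
    overlapKernel k β p x ^ m ≤ exp (κ * (n * x ^ 2)) :=
  calc overlapKernel k β p x ^ m ≤ exp (β ^ 2 * k ^ 2 * x ^ 2) ^ m :=
        pow_le_pow_left₀ (by linarith [one_le_overlapKernel k β hp hx])
          (overlapKernel_le_exp β hp hx hkx) m
    _ = exp (m * (β ^ 2 * k ^ 2) * x ^ 2) := by rw [← exp_nat_mul]; ring_nf
    _ ≤ exp (κ * (n * x ^ 2)) := by rw [← mul_assoc κ]; gcongr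

lemma abs_overlapKernel_pow_sub_pow_le {β r n : ℝ} {m : ℕ} (hp : 1 ≤ p) (hq : 1 ≤ q)
    (hx : |x| ≤ 1) (hpx : k * |x| ≤ p) (hqx : k * |x| ≤ q) (hn : 0 < n)
    (hm : m ≤ r * n) (hβ : r * (β ^ 2 * k ^ 2) ≤ 1 / 8) :
    |overlapKernel k β p x ^ m - overlapKernel k β q x ^ m| ≤
      256 * r * (β ^ 2 * 2 ^ k) / n * exp (n * x ^ 2 / 4) := by
  have hr : 0 ≤ r := nonneg_of_mul_nonneg_left (m.cast_nonneg.trans hm) hn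
  have hp_one := one_le_overlapKernel k β hp hx
  have hq_one := one_le_overlapKernel k β hq hx
  have hsub : |overlapKernel k β p x - overlapKernel k β q x| ≤ 2 * (β ^ 2 * 2 ^ k) * x ^ 4 := by
    have htp := abs_overlapKernel_sub_le k β hp hx
    have htq := abs_overlapKernel_sub_le k β hq hx
    rw [abs_sub_comm] at htq
    linarith [abs_sub_le (overlapKernel k β p x) (1 + β ^ 2 * k.choose 2 * x ^ 2)
      (overlapKernel k β q x)]
  have hmβ : m * (β ^ 2 * k ^ 2) ≤ 1 / 8 * n := by
    calc m * (β ^ 2 * k ^ 2) ≤ r * n * (β ^ 2 * k ^ 2) := by gcongr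
      _ = r * (β ^ 2 * k ^ 2) * n := by ring
      _ ≤ 1 / 8 * n := by gcongr
  have hmax : max (overlapKernel k β p x) (overlapKernel k β q x) ^ (m - 1) ≤
      exp (1 / 8 * (n * x ^ 2)) := by
    refine (pow_le_pow_right₀ (le_max_of_le_left hp_one) (Nat.sub_le m 1)).trans ?_
    rcases max_choice (overlapKernel k β p x) (overlapKernel k β q x) with h | h <;> rw [h]
    exacts [overlapKernel_pow_le_exp hp hx hpx hmβ, overlapKernel_pow_le_exp hq hx hqx hmβ]
  have hsq : (n * x ^ 2) ^ 2 ≤ 128 * exp (1 / 8 * (n * x ^ 2)) := by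
    have hy : 0 ≤ n * x ^ 2 := by positivity
    nlinarith [quadratic_le_exp_of_nonneg (show 0 ≤ 1 / 8 * (n * x ^ 2) by positivity)]
  have hpow := abs_pow_sub_pow_le (overlapKernel k β p x) (overlapKernel k β q x) m
  rw [abs_of_pos (one_pos.trans_le hp_one), abs_of_pos (one_pos.trans_le hq_one)] at hpow
  refine hpow.trans ?_
  calc |overlapKernel k β p x - overlapKernel k β q x| * m *
        max (overlapKernel k β p x) (overlapKernel k β q x) ^ (m - 1)
      ≤ 2 * (β ^ 2 * 2 ^ k) * x ^ 4 * (r * n) * exp (1 / 8 * (n * x ^ 2)) := by gcongr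
    _ = 2 * r * (β ^ 2 * 2 ^ k) / n * ((n * x ^ 2) ^ 2 * exp (1 / 8 * (n * x ^ 2))) := by field_simp
    _ ≤ 2 * r * (β ^ 2 * 2 ^ k) / n *
          (128 * exp (1 / 8 * (n * x ^ 2)) * exp (1 / 8 * (n * x ^ 2))) := by gcongr
    _ = 256 * r * (β ^ 2 * 2 ^ k) / n * exp (n * x ^ 2 / 4) := by
        rw [mul_assoc 128, ← exp_add]
        ring_nf

lemma overlapKernel_second_difference_le {β r n : ℝ} {m : ℕ} (hk : 1 ≤ k) (hx : |x| ≤ 1)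
    (hn : 0 < n) (hm : m ≤ r * n) (hβ : r * (β ^ 2 * k ^ 2) ≤ 1 / 8) :
    overlapKernel k β 1 x ^ m - 2 * overlapKernel k β k x ^ m + overlapKernel k β (k ^ 2) x ^ m ≤
      768 * r * (β ^ 2 * 2 ^ k) / n * exp (n * x ^ 2 / 4) +
        if 1 / k ≤ |x| then overlapKernel k β 1 x ^ m else 0 := by
  have hk_one : (1 : ℝ) ≤ k := Nat.one_le_cast.2 hk
  have hk_sq : (1 : ℝ) ≤ (k : ℝ) ^ 2 := one_le_pow₀ hk_one
  have hkx : k * |x| ≤ k := mul_le_of_le_one_right k.cast_nonneg hx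
  have hkx_sq : k * |x| ≤ (k : ℝ) ^ 2 := hkx.trans (le_self_pow₀ hk_one two_ne_zero)
  have hsmooth := abs_le.1 <|
    abs_overlapKernel_pow_sub_pow_le hk_one hk_sq hx hkx hkx_sq hn hm hβ
  have hsplit : 768 * r * (β ^ 2 * 2 ^ k) / n * exp (n * x ^ 2 / 4) =
      3 * (256 * r * (β ^ 2 * 2 ^ k) / n * exp (n * x ^ 2 / 4)) := by ring
  rw [hsplit]
  split_ifs with hlarge
  · have := pow_nonneg (zero_le_one.trans (one_le_overlapKernel k β hk_sq hx)) m
    linarith [hsmooth.1]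
  · have hsmall : k * |x| ≤ 1 := by
      rw [not_le, lt_div_iff₀ (one_pos.trans_le hk_one)] at hlarge
      linarith
    have hsharp := abs_le.1 <|
      abs_overlapKernel_pow_sub_pow_le le_rfl hk_sq hx hsmall hkx_sq hn hm hβ
    linarith [hsmooth.1, hsharp.2]

end OverlapKernel

section SecondDifference

variable {V : Type*} [Fintype V] [DecidableEq V] [Nonempty V] {k m : ℕ}

lemma expect_overlapKernel_second_difference_le {β r δ : ℝ} (hk : 1 ≤ k)
    (hm : m ≤ r * Fintype.card V) (hβ : r * (β ^ 2 * k ^ 2) ≤ 1 / 8)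
    (hgap : ∀ x : ℝ, |x| ≤ 1 → 1 / k ≤ |x| →
      r * log (overlapKernel k β 1 x) ≤ log 2 - binEntropy ((1 + x) / 2) - δ) :
    𝔼 z : V → Bool, (overlapKernel k β 1 (magnetization z) ^ m -
        2 * overlapKernel k β k (magnetization z) ^ m +
        overlapKernel k β (k ^ 2) (magnetization z) ^ m) ≤
      768 * r * (β ^ 2 * 2 ^ k) / Fintype.card V * √2 +
        (Fintype.card V + 1) * exp (-(δ * Fintype.card V)) := by
  have hn : (0 : ℝ) < Fintype.card V := Nat.cast_pos.2 Fintype.card_pos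
  have hr : 0 ≤ r := nonneg_of_mul_nonneg_left (m.cast_nonneg.trans hm) hn
  have hlarge (x : ℝ) (hx_lower : -1 ≤ x) (hx_upper : x ≤ 1) :
      (if 1 / k ≤ |x| then overlapKernel k β 1 x ^ m else 0) ≤
        exp (Fintype.card V * (log 2 - binEntropy ((1 + x) / 2) - δ)) := by
    split_ifs with hkx
    · have hx : |x| ≤ 1 := abs_le.2 ⟨hx_lower, hx_upper⟩
      have hone := one_le_overlapKernel k β le_rfl hx
      have hlog := log_nonneg hone
      rw [← exp_log (pow_pos (one_pos.trans_le hone) m), log_pow, exp_le_exp]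
      calc m * log (overlapKernel k β 1 x)
          ≤ r * Fintype.card V * log (overlapKernel k β 1 x) := by gcongr
        _ = Fintype.card V * (r * log (overlapKernel k β 1 x)) := by ring
        _ ≤ _ := by gcongr; exact hgap x hx hkx
    · positivity
  refine (expect_le_expect fun z _ ↦ overlapKernel_second_difference_le hk
    (abs_magnetization_le_one z) hn hm hβ).trans ?_
  rw [expect_add_distrib, ← mul_expect]
  gcongr
  · exact expect_exp_card_mul_magnetization_sq_le
  · exact expect_magnetization_le_of_le_exp _ δ hlarge

end SecondDifference

section Entropy

lemma negMulLog_le_sub_sub_mul_log {p q : ℝ} (hp : 0 ≤ p) (hq : 0 < q) :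
    negMulLog p ≤ q - p - p * log q := by
  rcases hp.eq_or_lt with rfl | hp
  · simpa using hq.le
  have hlog := mul_le_mul_of_nonneg_left (log_le_sub_one_of_pos (div_pos hq hp)) hp.le
  rw [log_div hq.ne' hp.ne', mul_sub, mul_sub, mul_div_cancel₀ _ hp.ne'] at hlog
  rw [negMulLog]
  linarith

lemma binEntropy_le_mul_add_exp_neg {ε : ℝ} (hε : 0 ≤ ε) (hε_le : ε ≤ 1) (s : ℝ) :
    binEntropy ε ≤ ε * s + exp (-s) := by
  have hε_log := negMulLog_le_sub_sub_mul_log hε (exp_pos (-s))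
  have hsub_log := negMulLog_le_sub_sub_mul_log (sub_nonneg.2 hε_le) one_pos
  rw [log_exp] at hε_log
  rw [log_one] at hsub_log
  rw [binEntropy_eq_negMulLog_add_negMulLog_one_sub]
  linarith

lemma binEntropy_one_add_div_two_le {x : ℝ} (hx : |x| ≤ 1) :
    binEntropy ((1 + x) / 2) ≤ log 2 - x ^ 2 / 2 := by
  obtain ⟨hx_lower, hx_upper⟩ := abs_le.1 hx
  have hcosh : 0 < 2 * cosh x := mul_pos two_pos (cosh_pos x)
  have hlog_cosh : log (cosh x) ≤ x ^ 2 / 2 :=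
    (log_le_iff_le_exp (cosh_pos x)).2 (cosh_le_exp_half_sq x)
  have hplus := negMulLog_le_sub_sub_mul_log (p := (1 + x) / 2) (by linarith)
    (div_pos (exp_pos x) hcosh)
  have hminus := negMulLog_le_sub_sub_mul_log (p := (1 - x) / 2) (by linarith)
    (div_pos (exp_pos (-x)) hcosh)
  have hsum : exp x / (2 * cosh x) + exp (-x) / (2 * cosh x) = 1 := by
    rw [← add_div, div_eq_one_iff_eq hcosh.ne', cosh_eq]
    ring
  have hcompl : 1 - (1 + x) / 2 = (1 - x) / 2 := by ring
  rw [log_div (exp_pos _).ne' hcosh.ne', log_exp, log_mul two_ne_zero (cosh_pos x).ne']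
    at hplus hminus
  rw [binEntropy_eq_negMulLog_add_negMulLog_one_sub, hcompl]
  linarith

end Entropy

section ElementaryBounds

variable {k : ℕ} {N a c : ℝ}

lemma sixteen_mul_pow_four_le_two_pow (hk : 24 ≤ k) : 16 * (k : ℝ) ^ 4 ≤ 2 ^ (k - 1) := by
  induction k, hk using Nat.le_induction with
  | base => norm_num
  | succ k hk ih =>
    have hkr : (24 : ℝ) ≤ k := Nat.ofNat_le_cast.2 hk
    have hratio : ((k : ℝ) + 1) ^ 4 ≤ 2 * (k : ℝ) ^ 4 :=
      calc ((k : ℝ) + 1) ^ 4 ≤ (25 / 24 * k) ^ 4 := by gcongr; linarith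
        _ ≤ 2 * (k : ℝ) ^ 4 := by rw [mul_pow]; gcongr; norm_num
    rw [Nat.add_sub_cancel, ← mul_pow_sub_one (by omega) (2 : ℝ)]
    push_cast
    linarith

lemma mul_sq_le_exp {y : ℝ} (hy : 40 ≤ y) : 4000 * y ^ 2 ≤ exp y :=
  calc 4000 * y ^ 2 ≤ y ^ 6 * y ^ 2 / 40320 := by
        have hpow : (40 : ℝ) ^ 6 ≤ y ^ 6 := by gcongr
        nlinarith [sq_nonneg y]
    _ = y ^ 8 / Nat.factorial 8 := by norm_num [Nat.factorial]; ring
    _ ≤ exp y := pow_div_factorial_le_exp y (by linarith) 8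

lemma exp_neg_le_one_sub_add_sq_div_two {y : ℝ} (hy : 0 ≤ y) : exp (-y) ≤ 1 - y + y ^ 2 / 2 := by
  have hpos : 0 < 1 + y + y ^ 2 / 2 := by positivity
  calc exp (-y) = (exp y)⁻¹ := exp_neg y
    _ ≤ (1 + y + y ^ 2 / 2)⁻¹ := inv_anti₀ hpos (quadratic_le_exp_of_nonneg hy)
    _ ≤ 1 - y + y ^ 2 / 2 := by
        rw [inv_le_iff_one_le_mul₀ hpos]
        nlinarith [sq_nonneg (y ^ 2)]

lemma log_one_add_one_div_sub_one_le (hN : 2 ≤ N) :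
    log (1 + 1 / (N - 1)) ≤ N⁻¹ + N⁻¹ ^ 2 / 2 + 2 * N⁻¹ ^ 3 := by
  have hN_pos : 0 < N - 1 := by linarith
  have hinv_pos : 0 < N⁻¹ := inv_pos.2 (by linarith)
  have hinv_le : N⁻¹ ≤ 1 / 2 := by
    rw [one_div]
    exact inv_anti₀ two_pos hN
  have hinv : 1 + 1 / (N - 1) = (1 - N⁻¹)⁻¹ := by
    field_simp
    ring
  have htaylor := (abs_le.1 (abs_log_sub_add_sum_range_le
    (show |N⁻¹| < 1 by rw [abs_of_pos hinv_pos]; linarith) 2)).1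
  have htail : N⁻¹ ^ 3 / (1 - N⁻¹) ≤ 2 * N⁻¹ ^ 3 := by
    rw [div_le_iff₀ (by linarith)]
    nlinarith [pow_pos hinv_pos 3]
  rw [hinv, log_inv]
  simp only [abs_of_pos hinv_pos, sum_range_succ, sum_range_zero, zero_add, Nat.reduceAdd, pow_one,
    Nat.cast_zero, Nat.cast_one, div_one, one_add_one_eq_two] at htaylor
  linarith

lemma mul_log_one_add_one_div_sub_one_le (hN : 2 ≤ N) (hc : 0 ≤ c)
    (hR : 0 ≤ N * log 2 - log 2 / 2 - c) :
    (N * log 2 - log 2 / 2 - c) * log (1 + 1 / (N - 1)) ≤ log 2 - c * N⁻¹ + 2 * N⁻¹ ^ 2 := by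
  have hlog_le : log 2 ≤ 1 := by linarith [log_two_lt_d9]
  have hrest : 0 ≤ (log 2 / 2 + c) * (N⁻¹ ^ 2 / 2 + 2 * N⁻¹ ^ 3) := by positivity
  calc (N * log 2 - log 2 / 2 - c) * log (1 + 1 / (N - 1))
      ≤ (N * log 2 - log 2 / 2 - c) * (N⁻¹ + N⁻¹ ^ 2 / 2 + 2 * N⁻¹ ^ 3) := by
        gcongr
        exact log_one_add_one_div_sub_one_le hN
    _ = log 2 - c * N⁻¹ + 2 * log 2 * N⁻¹ ^ 2 -
          (log 2 / 2 + c) * (N⁻¹ ^ 2 / 2 + 2 * N⁻¹ ^ 3) := by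
        field_simp
        ring
    _ ≤ log 2 - c * N⁻¹ + 2 * log 2 * N⁻¹ ^ 2 := sub_le_self _ hrest
    _ ≤ log 2 - c * N⁻¹ + 2 * N⁻¹ ^ 2 := by gcongr; linarith

lemma log_one_add_sq_mul_le (hN : 2 ≤ N) (ha : 0 < a) :
    log (1 + (1 / (N - 1)) ^ 2 * (N * a - 1)) ≤ log (1 + 1 / (N - 1)) - 1 / (N - 1) * (1 - a) := by
  have hN_pos : 0 < N - 1 := by linarith
  have hβ_pos : 0 < 1 / (N - 1) := one_div_pos.2 hN_pos
  have hβ_le : 1 / (N - 1) ≤ 1 := (div_le_one hN_pos).2 (by linarith)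
  have hfactor : 1 + (1 / (N - 1)) ^ 2 * (N * a - 1) =
      (1 + 1 / (N - 1)) * (1 - 1 / (N - 1) * (1 - a)) := by
    field_simp
    ring
  have hpos : 0 < 1 - 1 / (N - 1) * (1 - a) := by nlinarith
  rw [hfactor, log_mul (by positivity) hpos.ne']
  linarith [log_le_sub_one_of_pos hpos]

lemma mul_one_div_sub_one_sq_mul_le (hN : 3 ≤ N) (ha : a ≤ 1) :
    N * ((1 / (N - 1)) ^ 2 * (N * a - 1)) ≤ a + 2 / N := by
  have hN_pos : 0 < N - 1 := by linarith
  have hN_inv : 0 < 2 / N := div_pos two_pos (by linarith)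
  have hlhs : N * ((1 / (N - 1)) ^ 2 * (N * a - 1)) = N * (N * a - 1) / (N - 1) ^ 2 := by
    field_simp
  have hrhs : (a + 2 / N) * (N - 1) ^ 2 = a * N ^ 2 - 2 * (N * a) + a + 2 * N - 4 + 2 / N := by
    field_simp
    ring
  rw [hlhs, div_le_iff₀ (by positivity), hrhs]
  nlinarith

lemma exp_neg_mul_log_two_sub_le (hk : 2 ≤ k) :
    exp (-(k * log 2 - 2 / k)) ≤ (1 + 4 / k) / 2 * (2 ^ (k - 1))⁻¹ := by
  have hkr : (2 : ℝ) ≤ k := Nat.ofNat_le_cast.2 hk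
  have hexp_two_div : exp (2 / k) ≤ 1 + 4 / k := by
    have habs : |2 / (k : ℝ)| = 2 / k := abs_of_nonneg (by positivity)
    have hle : |2 / (k : ℝ)| ≤ 1 := by rw [habs]; exact div_le_one_of_le₀ hkr (by positivity)
    have hbound := (abs_le.1 (abs_exp_sub_one_le hle)).2
    have hfour : 2 * (2 / (k : ℝ)) = 4 / k := by ring
    rw [habs, hfour] at hbound
    linarith
  calc exp (-(k * log 2 - 2 / k)) = exp (2 / k) * (2 ^ k)⁻¹ := by
        rw [neg_sub, sub_eq_add_neg, exp_add, exp_neg, exp_nat_mul, exp_log two_pos]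
    _ ≤ (1 + 4 / k) * (2 ^ k)⁻¹ := by gcongr
    _ = (1 + 4 / k) / 2 * (2 ^ (k - 1))⁻¹ := by
        rw [← mul_pow_sub_one (by omega) (2 : ℝ), mul_inv]
        ring

end ElementaryBounds

section EnergyEntropyGap

variable {k : ℕ} {ε : ℝ}

/-- The probability that `k` bits, each flipped independently with probability `ε`, are all flipped
or all unflipped. -/
noncomputable def agreementProb (k : ℕ) (ε : ℝ) : ℝ := (1 - ε) ^ k + ε ^ k

/-- The clause density below which the second moment of the NAE-partition function is under control.
The correction `8 / k` serves as the sequence `t_k` for large `k`. -/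
noncomputable def naeDensityBound (k : ℕ) : ℝ :=
  2 ^ (k - 1) * log 2 - log 2 / 2 - (1 + 8 / k) / 2

lemma overlapKernel_one_sub_two_mul (hk : 1 ≤ k) (β ε : ℝ) :
    overlapKernel k β 1 (1 - 2 * ε) = 1 + β ^ 2 * (2 ^ (k - 1) * agreementProb k ε - 1) := by
  have hplus : (1 + (1 - 2 * ε)) ^ k = 2 ^ k * (1 - ε) ^ k := by rw [← mul_pow]; ring
  have hminus : (1 - (1 - 2 * ε)) ^ k = 2 ^ k * ε ^ k := by rw [← mul_pow]; ring
  rw [overlapKernel, evenExcess, agreementProb, div_one, hplus, hminus,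
    ← mul_pow_sub_one (by omega) (2 : ℝ)]
  ring

lemma agreementProb_le_one (hk : 1 ≤ k) (hε : 0 ≤ ε) (hε_le : ε ≤ 1) : agreementProb k ε ≤ 1 := by
  have hflipped := pow_le_of_le_one hε hε_le (n := k) (by omega)
  have hunflipped := pow_le_of_le_one (sub_nonneg.2 hε_le) (sub_le_self 1 hε) (n := k) (by omega)
  rw [agreementProb]
  linarith

lemma agreementProb_le_exp_neg_add_sq (hk : 2 ≤ k) (hε : 0 ≤ ε) (hε_le : ε ≤ 1) :
    agreementProb k ε ≤ exp (-(k * ε)) + ε ^ 2 := by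
  rw [agreementProb, ← mul_neg, sub_eq_add_neg]
  exact add_le_add (one_add_pow_le_exp_mul k (neg_le_neg hε_le))
    (pow_le_pow_of_le_one hε hε_le hk)

lemma naeDensityBound_le (k : ℕ) : naeDensityBound k ≤ 2 ^ (k - 1) * log 2 := by
  have hlog : 0 < log 2 := log_pos one_lt_two
  have hinv : 0 ≤ 8 / (k : ℝ) := by positivity
  rw [naeDensityBound]
  linarith

lemma le_naeDensityBound (hk : 8 ≤ k) : 2 ^ (k - 1) * log 2 - 2 ≤ naeDensityBound k := by
  have hinv : 8 / (k : ℝ) ≤ 1 := div_le_one_of_le₀ (Nat.ofNat_le_cast.2 hk) k.cast_nonneg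
  rw [naeDensityBound]
  linarith [log_two_lt_d9]

lemma naeDensityBound_pos (hk : 8 ≤ k) : 0 < naeDensityBound k := by
  have hpow : (2 : ℝ) ^ (8 - 1) ≤ 2 ^ (k - 1) := pow_le_pow_right₀ one_le_two (by omega)
  norm_num at hpow
  nlinarith [le_naeDensityBound hk, log_two_gt_d9]

lemma log_two_sub_le_naeDensityBound_mul_naeBias (hk : 8 ≤ k) :
    log 2 - 2 * (2 ^ (k - 1))⁻¹ ≤ naeDensityBound k * naeBias k := by
  have hpow : (2 : ℝ) ≤ 2 ^ (k - 1) := le_self_pow₀ one_le_two (by omega)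
  calc log 2 - 2 * (2 ^ (k - 1))⁻¹ = (2 ^ (k - 1) * log 2 - 2) * (2 ^ (k - 1))⁻¹ := by field_simp
    _ ≤ naeDensityBound k * (2 ^ (k - 1))⁻¹ := by gcongr; exact le_naeDensityBound hk
    _ ≤ naeDensityBound k * naeBias k := by
        have := (naeDensityBound_pos hk).le
        rw [naeBias, one_div]
        gcongr <;> linarith

lemma mul_sub_div_le_one_sub_agreementProb (hk : 2 ≤ k) (hε : 0 ≤ ε) (hεk : ε ≤ 1 / k ^ 3) :
    k * ε - ε / k ≤ 1 - agreementProb k ε := by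
  have hkr : (2 : ℝ) ≤ k := Nat.ofNat_le_cast.2 hk
  have hk_sq : (2 : ℝ) ≤ (k : ℝ) ^ 2 := hkr.trans (le_self_pow₀ (by linarith) two_ne_zero)
  have hε_le : ε ≤ 1 :=
    hεk.trans (div_le_one_of_le₀ (one_le_pow₀ (by linarith)) (by positivity))
  have hkε_sq : ((k : ℝ) * ε) ^ 2 ≤ ε / k :=
    calc ((k : ℝ) * ε) ^ 2 = k ^ 2 * ε * ε := by ring
      _ ≤ k ^ 2 * (1 / k ^ 3) * ε := by gcongr
      _ = ε / k := by field_simp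
  have hε_sq : ε ^ 2 ≤ ((k : ℝ) * ε) ^ 2 / 2 := by
    rw [mul_pow]
    nlinarith [sq_nonneg ε]
  linarith [agreementProb_le_exp_neg_add_sq hk hε hε_le,
    exp_neg_le_one_sub_add_sq_div_two (mul_nonneg k.cast_nonneg hε)]

lemma two_mul_inv_two_pow_mul_le (hk : 24 ≤ k) : 2 * ((2 : ℝ) ^ (k - 1))⁻¹ * k ≤ 1 / k := by
  have hk_pos : (0 : ℝ) < k := Nat.cast_pos.2 (by omega)
  have hk_one : (1 : ℝ) ≤ k := Nat.one_le_cast.2 (by omega)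
  rw [le_div_iff₀ hk_pos]
  calc 2 * ((2 : ℝ) ^ (k - 1))⁻¹ * k * k = 2 * (k : ℝ) ^ 2 * (2 ^ (k - 1))⁻¹ := by ring
    _ ≤ 16 * (k : ℝ) ^ 4 * (2 ^ (k - 1))⁻¹ := by gcongr <;> norm_num
    _ ≤ 2 ^ (k - 1) * (2 ^ (k - 1))⁻¹ := by gcongr; exact sixteen_mul_pow_four_le_two_pow hk
    _ = 1 := mul_inv_cancel₀ (by positivity)

lemma sub_le_naeDensityBound_mul_one_sub_agreementProb (hk : 24 ≤ k) (hε : 0 ≤ ε)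
    (hεk : ε ≤ 1 / k ^ 3) :
    k * log 2 * ε - 1.7 * (ε / k) ≤
      naeDensityBound k * (naeBias k * (1 - agreementProb k ε)) := by
  have hk_one : (1 : ℝ) ≤ k := Nat.one_le_cast.2 (by omega)
  have hεk_div : 0 ≤ ε / k := by positivity
  have hdiff : 0 ≤ k * ε - ε / k :=
    sub_nonneg.2 <| (div_le_self hε hk_one).trans (le_mul_of_one_le_left hε hk_one)
  have hpow : 0 < ((2 : ℝ) ^ (k - 1))⁻¹ := by positivity
  have hbias := log_two_sub_le_naeDensityBound_mul_naeBias (k := k) (by omega)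
  have hsmall : 2 * ((2 : ℝ) ^ (k - 1))⁻¹ * k * ε ≤ ε / k :=
    (mul_le_mul_of_nonneg_right (two_mul_inv_two_pow_mul_le hk) hε).trans_eq (by ring)
  have hpow_small : 2 * ((2 : ℝ) ^ (k - 1))⁻¹ ≤ log 2 := by
    have := two_mul_inv_two_pow_mul_le hk
    have : 1 / (k : ℝ) ≤ 1 / 24 := by gcongr; exact Nat.ofNat_le_cast.2 hk
    nlinarith [log_two_gt_d9]
  calc k * log 2 * ε - 1.7 * (ε / k)
      ≤ (log 2 - 2 * (2 ^ (k - 1))⁻¹) * (k * ε - ε / k) := by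
        nlinarith [mul_nonneg hpow.le hεk_div, log_two_lt_d9]
    _ ≤ naeDensityBound k * naeBias k * (1 - agreementProb k ε) := by
        exact mul_le_mul hbias (mul_sub_div_le_one_sub_agreementProb (by omega) hε hεk) hdiff
          ((sub_nonneg.2 hpow_small).trans hbias)
    _ = naeDensityBound k * (naeBias k * (1 - agreementProb k ε)) := mul_assoc ..

-- The entropy is bounded by its tangent at `exp (-s)` with `s = k log 2 - 2 / k`, near the
-- maximiser of `binEntropy ε - k ε log 2`; this is where the `1 / 2` in the density comes from.
lemma naeDensityBound_mul_log_overlapKernel_lt_of_le_inv_cube (hk : 24 ≤ k) (hε : 0 ≤ ε)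
    (hεk : ε ≤ 1 / k ^ 3) :
    naeDensityBound k * log (overlapKernel k (naeBias k) 1 (1 - 2 * ε)) <
      log 2 - binEntropy ε := by
  have hk_one : (1 : ℝ) ≤ k := Nat.one_le_cast.2 (by omega)
  have hε_lt : ε < 1 := hεk.trans_lt <| (div_lt_one (by positivity)).2 <|
    one_lt_pow₀ (Nat.one_lt_cast.2 (by omega)) three_ne_zero
  have hR := (naeDensityBound_pos (k := k) (by omega)).le
  have hpow : (2 : ℝ) ≤ 2 ^ (k - 1) := le_self_pow₀ one_le_two (by omega)
  have hagree : 0 < agreementProb k ε :=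
    add_pos_of_pos_of_nonneg (pow_pos (sub_pos.2 hε_lt) k) (pow_nonneg hε k)
  have henergy : naeDensityBound k * log (overlapKernel k (naeBias k) 1 (1 - 2 * ε)) ≤
      naeDensityBound k * log (1 + naeBias k) -
        naeDensityBound k * (naeBias k * (1 - agreementProb k ε)) := by
    rw [overlapKernel_one_sub_two_mul (by omega), ← mul_sub]
    gcongr
    exact log_one_add_sq_mul_le hpow hagree
  have hbias : naeDensityBound k * log (1 + naeBias k) ≤
      log 2 - (1 + 8 / k) / 2 * (2 ^ (k - 1))⁻¹ + 2 * (2 ^ (k - 1))⁻¹ ^ 2 :=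
    mul_log_one_add_one_div_sub_one_le hpow (by positivity) hR
  have hagreement := sub_le_naeDensityBound_mul_one_sub_agreementProb hk hε hεk
  have hentropy := binEntropy_le_mul_add_exp_neg hε hε_lt.le (k * log 2 - 2 / k)
  have htangent := exp_neg_mul_log_two_sub_le (k := k) (by omega)
  have hcorrection : 2 * ((2 : ℝ) ^ (k - 1))⁻¹ ^ 2 < 2 / k * (2 ^ (k - 1))⁻¹ := by
    have hinv : 0 < ((2 : ℝ) ^ (k - 1))⁻¹ := by positivity
    have := two_mul_inv_two_pow_mul_le hk
    rw [pow_two, ← mul_assoc]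
    gcongr
    rw [← one_div_mul_eq_div]
    nlinarith
  have hεk_div : 0 ≤ ε / k := by positivity
  have hlinear : ε * (k * log 2 - 2 / k) = k * log 2 * ε - 2 * (ε / k) := by ring
  have hsplit : (1 + 8 / (k : ℝ)) / 2 * (2 ^ (k - 1))⁻¹ =
      (1 + 4 / k) / 2 * (2 ^ (k - 1))⁻¹ + 2 / k * (2 ^ (k - 1))⁻¹ := by ring
  linarith

lemma naeDensityBound_mul_log_overlapKernel_le (hk : 8 ≤ k) (hε : 0 ≤ ε) (hε_le : ε ≤ 1) :
    naeDensityBound k * log (overlapKernel k (naeBias k) 1 (1 - 2 * ε)) ≤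
      log 2 * (agreementProb k ε + 2 / 2 ^ (k - 1)) := by
  have hkernel : 1 ≤ overlapKernel k (naeBias k) 1 (1 - 2 * ε) :=
    one_le_overlapKernel k _ le_rfl (abs_le.2 ⟨by linarith, by linarith⟩)
  have hpow : (3 : ℝ) ≤ 2 ^ (k - 1) :=
    (by norm_num : (3 : ℝ) ≤ 2 ^ 2).trans (pow_le_pow_right₀ one_le_two (by omega))
  have hlog : log (overlapKernel k (naeBias k) 1 (1 - 2 * ε)) ≤
      naeBias k ^ 2 * (2 ^ (k - 1) * agreementProb k ε - 1) := by
    refine (log_le_sub_one_of_pos (one_pos.trans_le hkernel)).trans_eq ?_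
    rw [overlapKernel_one_sub_two_mul (by omega), add_sub_cancel_left]
  calc naeDensityBound k * log (overlapKernel k (naeBias k) 1 (1 - 2 * ε))
      ≤ 2 ^ (k - 1) * log 2 * log (overlapKernel k (naeBias k) 1 (1 - 2 * ε)) := by
        gcongr
        exacts [log_nonneg hkernel, naeDensityBound_le k]
    _ ≤ 2 ^ (k - 1) * log 2 * (naeBias k ^ 2 * (2 ^ (k - 1) * agreementProb k ε - 1)) := by gcongr
    _ = log 2 * (2 ^ (k - 1) * (naeBias k ^ 2 * (2 ^ (k - 1) * agreementProb k ε - 1))) := by ring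
    _ ≤ log 2 * (agreementProb k ε + 2 / 2 ^ (k - 1)) := by
        gcongr
        exact mul_one_div_sub_one_sq_mul_le hpow (agreementProb_le_one (by omega) hε hε_le)

lemma log_two_mul_agreementProb_lt_of_le_inv (hk : 400 ≤ k) (hεk : 1 / k ^ 3 ≤ ε)
    (hε_le : ε ≤ 1 / k) :
    log 2 * (agreementProb k ε + 2 / 2 ^ (k - 1)) < log 2 - binEntropy ε := by
  have hkr : (400 : ℝ) ≤ k := Nat.ofNat_le_cast.2 hk
  have hk_pos : (0 : ℝ) < k := by linarith
  have hε : 0 < ε := (by positivity : (0 : ℝ) < 1 / k ^ 3).trans_le hεk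
  have hkε : k * ε ≤ 1 := by rwa [le_div_iff₀' hk_pos] at hε_le
  have hε_small : ε ≤ 1 / 400 := hε_le.trans (by gcongr)
  have hpow : 2 / 2 ^ (k - 1) ≤ ε := by
    refine le_trans ?_ hεk
    rw [div_le_div_iff₀ (by positivity) (by positivity)]
    nlinarith [sixteen_mul_pow_four_le_two_pow (k := k) (by omega), pow_pos hk_pos 3]
  have hagree : agreementProb k ε ≤ 1 - k * ε / 2 + 0.01 * ε := by
    have hquad := exp_neg_le_one_sub_add_sq_div_two (mul_nonneg hk_pos.le hε.le)
    have hkε_sq : (k * ε) ^ 2 ≤ k * ε := pow_le_of_le_one (by positivity) hkε two_ne_zero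
    have hε_sq : ε ^ 2 ≤ 0.01 * ε := by nlinarith
    linarith [agreementProb_le_exp_neg_add_sq (k := k) (by omega) hε.le (by linarith)]
  have hentropy := binEntropy_le_mul_add_exp_neg hε.le (by linarith) (3 * log k)
  have hexp : exp (-(3 * log k)) = 1 / (k : ℝ) ^ 3 := by
    rw [exp_neg, one_div, ← exp_log (pow_pos hk_pos 3), log_pow, Nat.cast_ofNat]
  have hlog_le : log k ≤ k / 64 + 3.2 := by
    have hlog := log_le_sub_one_of_pos (show 0 < (k : ℝ) / 2 ^ 6 by positivity)
    rw [log_div hk_pos.ne' (by positivity), log_pow] at hlog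
    norm_num at hlog
    linarith [log_two_lt_d9]
  have hlinear : 3 * log k + 1 < log 2 * (k / 2 - 1.01) := by
    nlinarith [log_two_gt_d9]
  rw [hexp] at hentropy
  nlinarith [log_two_gt_d9, mul_lt_mul_of_pos_left hlinear hε]

lemma log_two_mul_agreementProb_lt_of_le_one_div_ten (hk : 24 ≤ k) (hkε : 1 / k ≤ ε)
    (hε_le : ε ≤ 1 / 10) :
    log 2 * (agreementProb k ε + 2 / 2 ^ (k - 1)) < (1 - 2 * ε) ^ 2 / 2 := by
  have hk_pos : (0 : ℝ) < k := Nat.cast_pos.2 (by omega)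
  have hε : 0 < ε := (one_div_pos.2 hk_pos).trans_le hkε
  have hone_le : 1 ≤ k * ε := by rwa [div_le_iff₀' hk_pos] at hkε
  have hexp : exp (-(k * ε)) ≤ 0.368 :=
    (exp_le_exp.2 (neg_le_neg hone_le)).trans (by linarith [exp_neg_one_lt_d9])
  have hpow : (2 : ℝ) / 2 ^ (k - 1) ≤ 0.002 := by
    have hpow_le : (2 : ℝ) ^ 23 ≤ 2 ^ (k - 1) := pow_le_pow_right₀ one_le_two (by omega)
    rw [div_le_iff₀ (by positivity)]
    linarith
  have hagree := agreementProb_le_exp_neg_add_sq (k := k) (by omega) hε.le (by linarith)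
  nlinarith [log_two_lt_d9, log_two_gt_d9]

lemma log_two_mul_agreementProb_lt_of_one_div_ten_le (hk : 400 ≤ k) (hε : 1 / 10 ≤ ε)
    (hkε : 1 / k ≤ 1 - 2 * ε) :
    log 2 * (agreementProb k ε + 2 / 2 ^ (k - 1)) < (1 - 2 * ε) ^ 2 / 2 := by
  have hkr : (400 : ℝ) ≤ k := Nat.ofNat_le_cast.2 hk
  have hk_pos : (0 : ℝ) < k := by linarith
  have hinv : 0 < 1 / (k : ℝ) := one_div_pos.2 hk_pos
  have hexp : exp (-((k : ℝ) / 10)) ≤ 1 / 40 * (1 / k) ^ 2 := by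
    have hsq : 1 / 40 * (1 / (k : ℝ)) ^ 2 = (4000 * ((k : ℝ) / 10) ^ 2)⁻¹ := by field_simp; norm_num
    rw [exp_neg, hsq]
    exact inv_anti₀ (by positivity) (mul_sq_le_exp (by linarith))
  have hunflipped : (1 - ε) ^ k ≤ exp (-((k : ℝ) / 10)) := by
    rw [sub_eq_add_neg]
    refine (one_add_pow_le_exp_mul k (by linarith)).trans (exp_le_exp.2 ?_)
    nlinarith
  have hflipped : ε ^ k ≤ (1 - ε) ^ k := pow_le_pow_left₀ (by linarith) (by linarith) k
  have hpow : (2 : ℝ) / 2 ^ (k - 1) ≤ 1 / 20 * (1 / k) ^ 2 := by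
    have hpow_le := sixteen_mul_pow_four_le_two_pow (k := k) (by omega)
    have hsq : 1 / 20 * (1 / (k : ℝ)) ^ 2 = 1 / (20 * k ^ 2) := by field_simp
    rw [hsq, div_le_div_iff₀ (by positivity) (by positivity)]
    nlinarith [sq_nonneg ((k : ℝ) ^ 2 - 2)]
  have hagree : agreementProb k ε + 2 / 2 ^ (k - 1) ≤ 1 / 10 * (1 / k) ^ 2 := by
    rw [agreementProb]
    linarith
  have hsq_le : (1 / (k : ℝ)) ^ 2 ≤ (1 - 2 * ε) ^ 2 := pow_le_pow_left₀ hinv.le hkε 2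
  nlinarith [log_two_lt_d9, log_two_gt_d9, pow_pos hinv 2]

lemma naeDensityBound_mul_log_overlapKernel_lt (hk : 400 ≤ k) (hε : 0 ≤ ε)
    (hkε : 1 / k ≤ 1 - 2 * ε) :
    naeDensityBound k * log (overlapKernel k (naeBias k) 1 (1 - 2 * ε)) <
      log 2 - binEntropy ε := by
  have hinv : 0 < 1 / (k : ℝ) := one_div_pos.2 (Nat.cast_pos.2 (by omega))
  have henergy := naeDensityBound_mul_log_overlapKernel_le (k := k) (by omega) hε (by linarith)
  have hpinsker : (1 - 2 * ε) ^ 2 / 2 ≤ log 2 - binEntropy ε := by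
    have := binEntropy_one_add_div_two_le (x := 1 - 2 * ε) (abs_le.2 ⟨by linarith, by linarith⟩)
    rw [show (1 + (1 - 2 * ε)) / 2 = 1 - ε by ring, binEntropy_one_sub] at this
    linarith
  rcases le_total ε (1 / k ^ 3) with hcube | hcube
  · exact naeDensityBound_mul_log_overlapKernel_lt_of_le_inv_cube (by omega) hε hcube
  refine henergy.trans_lt ?_
  rcases le_total ε (1 / k) with hinv_le | hinv_le
  · exact log_two_mul_agreementProb_lt_of_le_inv hk hcube hinv_le
  refine lt_of_lt_of_le ?_ hpinsker
  rcases le_total ε (1 / 10) with hten | hten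
  · exact log_two_mul_agreementProb_lt_of_le_one_div_ten (by omega) hinv_le hten
  · exact log_two_mul_agreementProb_lt_of_one_div_ten_le hk hten hkε

lemma overlapKernel_abs (k : ℕ) (β x : ℝ) : overlapKernel k β 1 |x| = overlapKernel k β 1 x := by
  simp only [overlapKernel, div_one, evenExcess_abs]

lemma binEntropy_one_sub_abs_div_two (x : ℝ) :
    binEntropy ((1 - |x|) / 2) = binEntropy ((1 + x) / 2) := by
  rcases abs_choice x with h | h
  · rw [h, ← binEntropy_one_sub]
    ring_nf
  · rw [h, sub_neg_eq_add]

lemma mul_log_overlapKernel_lt_of_le_naeDensityBound {r x : ℝ} (hk : 400 ≤ k)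
    (hr : r ≤ naeDensityBound k) (hx : |x| ≤ 1) (hkx : 1 / k ≤ |x|) :
    r * log (overlapKernel k (naeBias k) 1 x) < log 2 - binEntropy ((1 + x) / 2) := by
  have hgap := naeDensityBound_mul_log_overlapKernel_lt (ε := (1 - |x|) / 2) hk (by linarith)
    (by linarith)
  rw [show 1 - 2 * ((1 - |x|) / 2) = |x| by ring, overlapKernel_abs,
    binEntropy_one_sub_abs_div_two] at hgap
  exact (mul_le_mul_of_nonneg_right hr (log_nonneg (one_le_overlapKernel k _ le_rfl hx))).trans_lt
    hgap

lemma exists_gap_of_le_naeDensityBound {r : ℝ} (hk : 400 ≤ k) (hr : r ≤ naeDensityBound k) :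
    ∃ δ > 0, ∀ x : ℝ, |x| ≤ 1 → 1 / k ≤ |x| →
      r * log (overlapKernel k (naeBias k) 1 x) ≤ log 2 - binEntropy ((1 + x) / 2) - δ := by
  let gap : ℝ → ℝ := fun x ↦
    log 2 - binEntropy ((1 + x) / 2) - r * log (overlapKernel k (naeBias k) 1 x)
  let macroscopic : Set ℝ := {x | |x| ≤ 1 ∧ 1 / k ≤ |x|}
  have hcompact : IsCompact macroscopic := by
    refine (isCompact_Icc (a := (-1 : ℝ)) (b := 1)).of_isClosed_subset ?_ fun x hx ↦ abs_le.1 hx.1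
    exact (isClosed_le continuous_abs continuous_const).inter
      (isClosed_le continuous_const continuous_abs)
  have hnonempty : macroscopic.Nonempty :=
    ⟨1, by simpa [macroscopic] using Nat.cast_inv_le_one k⟩
  have hcont : ContinuousOn gap macroscopic := by
    have hkernel : Continuous (overlapKernel k (naeBias k) 1) :=
      continuous_const.add
        (continuous_const.mul ((continuous_evenExcess k).comp (continuous_id.div_const 1)))
    refine (Continuous.continuousOn ?_).sub (continuousOn_const.mul (hkernel.continuousOn.log ?_))
    · exact continuous_const.sub (binEntropy_continuous.comp (by fun_prop))
    · exact fun x hx ↦ (one_pos.trans_le (one_le_overlapKernel k _ le_rfl hx.1)).ne'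
  obtain ⟨y, hy, hmin⟩ := hcompact.exists_isMinOn hnonempty hcont
  refine ⟨gap y, sub_pos.2 (mul_log_overlapKernel_lt_of_le_naeDensityBound hk hr hy.1 hy.2),
    fun x hx hkx ↦ ?_⟩
  linarith [show gap y ≤ gap x from hmin ⟨hx, hkx⟩, show gap x = log 2 - binEntropy ((1 + x) / 2) -
    r * log (overlapKernel k (naeBias k) 1 x) from rfl]

end EnergyEntropyGap

section RandomOrderedClauses

section NAEBias

variable {k : ℕ}

lemma naeBias_nonneg (k : ℕ) : 0 ≤ naeBias k :=
  one_div_nonneg.2 (sub_nonneg.2 (one_le_pow₀ one_le_two))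

lemma naeBias_mul_two_pow_le (hk : 2 ≤ k) : naeBias k * 2 ^ (k - 1) ≤ 2 := by
  have hpow : (2 : ℝ) ≤ 2 ^ (k - 1) := le_self_pow₀ one_le_two (by omega)
  rw [naeBias, one_div_mul_eq_div, div_le_iff₀ (by linarith)]
  linarith

lemma naeBias_mul_sq_le (hk : 24 ≤ k) : naeBias k * k ^ 2 ≤ 1 / 16 := by
  have hk_sq : (2 : ℝ) ≤ k ^ 2 := by
    have : (24 : ℝ) ≤ k := Nat.ofNat_le_cast.2 hk
    nlinarith
  have hβ := naeBias_nonneg k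
  have hle : naeBias k * (16 * k ^ 4) ≤ 2 :=
    (mul_le_mul_of_nonneg_left (sixteen_mul_pow_four_le_two_pow hk) hβ).trans
      (naeBias_mul_two_pow_le (by omega))
  nlinarith [mul_nonneg (mul_nonneg hβ (sq_nonneg (k : ℝ))) (sub_nonneg.2 hk_sq)]

lemma mul_naeBias_sq_mul_sq_le {r : ℝ} (hk : 24 ≤ k) (hr : r ≤ 2 ^ (k - 1)) :
    r * (naeBias k ^ 2 * k ^ 2) ≤ 1 / 8 :=
  calc r * (naeBias k ^ 2 * k ^ 2) ≤ 2 ^ (k - 1) * (naeBias k ^ 2 * k ^ 2) := by gcongr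
    _ = naeBias k * 2 ^ (k - 1) * (naeBias k * k ^ 2) := by ring
    _ ≤ 2 * (1 / 16) := by
        have := naeBias_nonneg k
        gcongr
        exacts [naeBias_mul_two_pow_le (by omega), naeBias_mul_sq_le hk]
    _ = 1 / 8 := by norm_num

end NAEBias

variable {V : Type*} [Fintype V] [DecidableEq V] [Nonempty V] {k m : ℕ} {β r : ℝ}

lemma expect_pairCorrelation_clauseWeight_pow_mul_exp_le (hk : 1 ≤ k)
    (hm : m ≤ r * Fintype.card V) (hβ : (r + 1) * (β ^ 2 * k ^ 2) ≤ 1 / 4) :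
    𝔼 σ : V → Bool, 𝔼 τ : V → Bool,
      pairCorrelation (clauseWeight (k := k) β k) (clauseWeight β k) σ τ ^ m *
        exp (Fintype.card V *
          (pairCorrelation (clauseWeight (k := k) β k) (clauseWeight β k) σ τ - 1)) ≤ √2 := by
  simp_rw [pairCorrelation_clauseWeight]
  rw [expect_overlap_eq_expect_magnetization fun x ↦ overlapKernel k β (k * k) x ^ m *
    exp (Fintype.card V * (overlapKernel k β (k * k) x - 1))]
  refine (expect_le_expect fun z _ ↦ ?_).trans expect_exp_card_mul_magnetization_sq_le
  have hx := abs_magnetization_le_one z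
  generalize magnetization z = x at hx ⊢
  have hk_one : (1 : ℝ) ≤ k := Nat.one_le_cast.2 hk
  have hkk : (1 : ℝ) ≤ k * k := one_le_mul_of_one_le_of_one_le hk_one hk_one
  have hkx : k * |x| ≤ (k : ℝ) * k := by gcongr; exact hx.trans hk_one
  calc overlapKernel k β (k * k) x ^ m * exp (Fintype.card V * (overlapKernel k β (k * k) x - 1))
      ≤ exp (r * (β ^ 2 * k ^ 2) * (Fintype.card V * x ^ 2)) *
          exp (Fintype.card V * (β ^ 2 * k ^ 2 * x ^ 2)) := by
        gcongr
        · exact overlapKernel_pow_le_exp hkk hx hkx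
            ((mul_le_mul_of_nonneg_right hm (by positivity)).trans_eq (by ring))
        · linarith [overlapKernel_le β hkk hx hkx]
    _ = exp ((r + 1) * (β ^ 2 * k ^ 2) * (Fintype.card V * x ^ 2)) := by
        rw [← exp_add]
        ring_nf
    _ ≤ exp (1 / 4 * (Fintype.card V * x ^ 2)) := by gcongr
    _ = exp (Fintype.card V * x ^ 2 / 4) := by ring_nf

lemma neg_expect_log_partitionFunction_clauseWeight_le (hk : 1 ≤ k) (hβ : 0 ≤ β)
    (hm : m ≤ r * Fintype.card V) (hβk : β * k ^ 2 ≤ 1 / 6)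
    (hrβ : (r + 1) * (β ^ 2 * k ^ 2) ≤ 1 / 4) :
    -𝔼 F : Fin m → Fin k → V × Bool, log (partitionFunction (clauseWeight β k) F) ≤
      exp (2 * r) * (log (√2) / 2) := by
  have hn : (0 : ℝ) < Fintype.card V := Nat.cast_pos.2 Fintype.card_pos
  have hlog : 0 ≤ log (√2) := log_nonneg (one_le_sqrt.2 one_le_two)
  have hmoment (t : ℕ) (ht : t < m) := expect_pairCorrelation_clauseWeight_pow_mul_exp_le (V := V)
    (m := t) hk ((Nat.cast_le.2 ht.le).trans hm) hrβ
  have hgrowth : (1 + 2 / (Fintype.card V : ℝ)) ^ m ≤ exp (2 * r) :=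
    calc (1 + 2 / (Fintype.card V : ℝ)) ^ m ≤ exp (m * (2 / Fintype.card V)) :=
          one_add_pow_le_exp_mul m (by linarith [div_pos two_pos hn])
      _ ≤ exp (2 * r) := by
          rw [exp_le_exp, ← mul_div_assoc, div_le_iff₀ hn]
          linarith
  have hbound := neg_expect_log_partitionFunction_add_le (two_thirds_le_clauseWeight hβ hβk)
    (expect_clauseWeight β k) hn (B := log (√2))
    fun t ht ↦ (hmoment t ht).trans_eq (exp_log (by positivity)).symm
  linarith [mul_le_mul_of_nonneg_right hgrowth (div_nonneg hlog zero_le_two)]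

lemma expect_partitionFunction_clauseWeight_sub_sq_le {δ : ℝ} (hk : 1 ≤ k)
    (hm : m ≤ r * Fintype.card V) (hβ : r * (β ^ 2 * k ^ 2) ≤ 1 / 8)
    (hgap : ∀ x : ℝ, |x| ≤ 1 → 1 / k ≤ |x| →
      r * log (overlapKernel k β 1 x) ≤ log 2 - binEntropy ((1 + x) / 2) - δ) :
    𝔼 F : Fin m → Fin k → V × Bool,
        (partitionFunction (clauseWeight β 1) F - partitionFunction (clauseWeight β k) F) ^ 2 ≤
      768 * r * (β ^ 2 * 2 ^ k) / Fintype.card V * √2 +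
        (Fintype.card V + 1) * exp (-(δ * Fintype.card V)) := by
  simp_rw [expect_partitionFunction_sub_sq, pairCorrelation_clauseWeight, one_mul, ← pow_two]
  rw [expect_overlap_eq_expect_magnetization fun x ↦ overlapKernel k β 1 x ^ m -
    2 * overlapKernel k β k x ^ m + overlapKernel k β (k ^ 2) x ^ m]
  exact expect_overlapKernel_second_difference_le hk hm hβ hgap

lemma tendsto_div_mul_add_succ_mul_exp_neg (A c : ℝ) {δ : ℝ} (hδ : 0 < δ) :
    Tendsto (fun n : ℕ ↦ A / n * c + (n + 1) * exp (-(δ * n))) atTop (𝓝 0) := by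
  have hexp : Tendsto (fun n : ℕ ↦ exp (-(δ * n))) atTop (𝓝 0) :=
    tendsto_exp_neg_atTop_nhds_zero.comp (tendsto_natCast_atTop_atTop.const_mul_atTop hδ)
  have hmul_exp : Tendsto (fun n : ℕ ↦ (n : ℝ) * exp (-(δ * n))) atTop (𝓝 0) := by
    simpa [Function.comp_def] using
      (tendsto_rpow_mul_exp_neg_mul_atTop_nhds_zero 1 δ hδ).comp tendsto_natCast_atTop_atTop
  simpa [add_mul] using
    ((tendsto_const_div_atTop_nhds_zero_nat A).mul_const c).add (hmul_exp.add hexp)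

lemma tendsto_zero_of_eventually_le_div_add_mul {ι : Type*} {l : Filter ι} {P δ : ι → ℝ} {U : ℝ}
    {c : ℝ → ℝ} (hP : ∀ i, 0 ≤ P i) (hδ : Tendsto δ l (𝓝 0))
    (hle : ∀ s > 0, ∀ᶠ i in l, P i ≤ U / s + δ i * c s) : Tendsto P l (𝓝 0) := by
  refine tendsto_order.2 ⟨fun a ha ↦ .of_forall fun i ↦ ha.trans_le (hP i), fun ε hε ↦ ?_⟩
  obtain ⟨s, hs, hUs⟩ : ∃ s > 0, U / s < ε :=
    ((eventually_gt_atTop 0).and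
      ((tendsto_const_nhds.div_atTop tendsto_id).eventually_lt_const hε)).exists
  have hlim : Tendsto (fun i ↦ U / s + δ i * c s) l (𝓝 (U / s)) := by
    simpa using (hδ.mul_const (c s)).const_add (U / s)
  filter_upwards [hle s hs, hlim.eventually_lt_const hUs] with i using lt_of_le_of_lt

lemma tendsto_card_partitionFunction_eq_zero_div (hk : 400 ≤ k) (hr : 0 ≤ r)
    (hr_le : r ≤ naeDensityBound k) :
    Tendsto (fun n : ℕ ↦
      (#{F : Fin ⌊r * n⌋₊ → Fin k → Fin n × Bool |
          partitionFunction (clauseWeight (naeBias k) 1) F = 0} : ℝ) /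
        Fintype.card (Fin ⌊r * n⌋₊ → Fin k → Fin n × Bool)) atTop (𝓝 0) := by
  obtain ⟨δ, hδ, hgap⟩ := exists_gap_of_le_naeDensityBound hk hr_le
  have hr_pow : r ≤ 2 ^ (k - 1) := hr_le.trans <| (naeDensityBound_le k).trans <|
    mul_le_of_le_one_right (by positivity) (log_two_lt_d9.le.trans (by norm_num))
  have hβk := naeBias_mul_sq_le (k := k) (by omega)
  have hrβ := mul_naeBias_sq_mul_sq_le (k := k) (by omega) hr_pow
  have hβ := mul_naeBias_sq_mul_sq_le (k := k) (by omega) (one_le_pow₀ one_le_two)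
  refine tendsto_zero_of_eventually_le_div_add_mul (U := exp (2 * r) * (log (√2) / 2))
    (c := fun s ↦ exp (2 * (s + 1))) (fun n ↦ by positivity)
    (tendsto_div_mul_add_succ_mul_exp_neg (768 * r * (naeBias k ^ 2 * 2 ^ k)) (√2) hδ)
    fun s hs ↦ ?_
  filter_upwards [eventually_gt_atTop 0] with n hn
  have : NeZero n := ⟨hn.ne'⟩
  have hm : (⌊r * n⌋₊ : ℝ) ≤ r * Fintype.card (Fin n) := by
    rw [Fintype.card_fin]
    exact Nat.floor_le (by positivity)
  have hlog := neg_expect_log_partitionFunction_clauseWeight_le (V := Fin n) (k := k) (by omega)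
    (naeBias_nonneg k) hm (by linarith) (by linarith)
  have hsq := expect_partitionFunction_clauseWeight_sub_sq_le (by omega) hm hrβ hgap
  rw [Fintype.card_fin] at hsq
  refine (card_partitionFunction_eq_zero_div_le (w := clauseWeight (naeBias k) k) (fun c σ ↦ ?_)
    (expect_clauseWeight (naeBias k) k) hs).trans (by gcongr)
  linarith [two_thirds_le_clauseWeight (naeBias_nonneg k) (by linarith) c σ]

end RandomOrderedClauses

section OrderedClauses

variable {α : Type*} [DecidableEq α] {k m : ℕ}

/-- The formula obtained from a sequence of `m` ordered clauses of length `k` by forgetting the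
order, both of the clauses and within each clause, as well as repetitions. -/
def toFormula (F : Fin m → Fin k → α) : Finset (Finset α) := univ.image fun i ↦ univ.image (F i)

variable [Fintype α]

lemma factorial_le_card_image_eq {s : Finset α} (hs : #s = k) :
    k.factorial ≤ #{e : Fin k → α | univ.image e = s} := by
  have hcard : Fintype.card (Fin k ≃ s) = k.factorial := by
    rw [Fintype.card_equiv (s.equivFinOfCardEq hs).symm, Fintype.card_fin]
  rw [← hcard, ← card_univ]
  refine card_le_card_of_injOn (fun e i ↦ (e i : α)) (fun e _ ↦ ?_) fun e _ e' _ h ↦ ?_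
  · have himage : univ.image (Subtype.val ∘ e) = s := by
      rw [← image_image, image_univ_equiv, univ_eq_attach, attach_image_val]
    exact mem_coe.2 (mem_filter.2 ⟨mem_univ _, himage⟩)
  · exact Equiv.ext fun i ↦ Subtype.ext (congrFun h i)

lemma factorial_mul_factorial_pow_le_card_toFormula_eq {G : Finset (Finset α)} (hG : #G = m)
    (hclauses : ∀ C ∈ G, #C = k) :
    m.factorial * k.factorial ^ m ≤ #{F : Fin m → Fin k → α | toFormula F = G} := by
  let clauseOrders : Finset (Fin m → Finset α) := {e | univ.image e = G}
  have hmaps : ∀ F ∈ ({F | toFormula F = G} : Finset (Fin m → Fin k → α)),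
      (fun i ↦ univ.image (F i)) ∈ clauseOrders :=
    fun F hF ↦ mem_filter.2 ⟨mem_univ _, (mem_filter.1 hF).2⟩
  have hfiber (e) (he : e ∈ clauseOrders) : k.factorial ^ m ≤
      #{F ∈ ({F | toFormula F = G} : Finset (Fin m → Fin k → α)) |
        (fun i ↦ univ.image (F i)) = e} := by
    have heG : univ.image e = G := (mem_filter.1 he).2
    calc k.factorial ^ m = ∏ _i : Fin m, k.factorial := by simp
      _ ≤ ∏ i, #{f : Fin k → α | univ.image f = e i} := prod_le_prod' fun i _ ↦
          factorial_le_card_image_eq (hclauses _ (heG ▸ mem_image_of_mem e (mem_univ i)))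
      _ = #(Fintype.piFinset fun i ↦ {f : Fin k → α | univ.image f = e i}) :=
          (Fintype.card_piFinset _).symm
      _ ≤ _ := by
          refine card_le_card fun F hF ↦ ?_
          have himage : (fun i ↦ univ.image (F i)) = e :=
            funext fun i ↦ (mem_filter.1 (Fintype.mem_piFinset.1 hF i)).2
          have hFG : toFormula F = G := by rw [toFormula, himage, heG]
          exact mem_filter.2 ⟨mem_filter.2 ⟨mem_univ F, hFG⟩, himage⟩
  calc m.factorial * k.factorial ^ m ≤ #clauseOrders * k.factorial ^ m :=
        Nat.mul_le_mul_right _ (factorial_le_card_image_eq hG)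
    _ ≤ ∑ e ∈ clauseOrders, #{F ∈ ({F | toFormula F = G} : Finset (Fin m → Fin k → α)) |
          (fun i ↦ univ.image (F i)) = e} := card_nsmul_le_sum _ _ _ hfiber
    _ = _ := (card_eq_sum_card_fiberwise hmaps).symm

lemma card_mul_le_card_toFormula_mem {𝒢 : Finset (Finset (Finset α))} (hm : ∀ G ∈ 𝒢, #G = m)
    (hclauses : ∀ G ∈ 𝒢, ∀ C ∈ G, #C = k) :
    #𝒢 * (m.factorial * k.factorial ^ m) ≤ #{F : Fin m → Fin k → α | toFormula F ∈ 𝒢} := by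
  rw [card_eq_sum_card_fiberwise (f := toFormula) (t := 𝒢) fun F hF ↦ by simpa using hF]
  refine card_nsmul_le_sum _ _ _ fun G hG ↦ ?_
  refine (factorial_mul_factorial_pow_le_card_toFormula_eq (hm G hG) (hclauses G hG)).trans
    (card_le_card fun F hF ↦ ?_)
  have hFG : toFormula F = G := by simpa using hF
  simp [hFG, hG]

end OrderedClauses

section ProperClauses

lemma card_image_fst_eq {V : Type*} [Fintype V] [DecidableEq V] (s : Finset V) :
    #{C : Finset (V × Bool) | #C = #s ∧ C.image Prod.fst = s} = 2 ^ #s := by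
  rw [← card_powerset]
  refine card_nbij' (fun C ↦ {l ∈ C | l.2 = true}.image Prod.fst)
    (fun A ↦ s.image fun v ↦ (v, decide (v ∈ A))) (fun C hC ↦ ?_) (fun A _ ↦ ?_) (fun C hC ↦ ?_)
    fun A hA ↦ ?_
  · obtain ⟨-, rfl⟩ : #C = #s ∧ C.image Prod.fst = s := by simpa using hC
    exact mem_coe.2 (mem_powerset.2 (image_subset_image (filter_subset _ _)))
  · have hinj : Function.Injective fun v ↦ (v, decide (v ∈ A)) := fun v w h ↦ congrArg Prod.fst h
    simp [card_image_of_injective s hinj, image_image, Function.comp_def]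
  · obtain ⟨hcard, rfl⟩ : #C = #s ∧ C.image Prod.fst = s := by simpa using hC
    have hinj : Set.InjOn Prod.fst (C : Set (V × Bool)) := card_image_iff.1 hcard.symm
    have hpositive (l) (hl : l ∈ C) : l.1 ∈ {l ∈ C | l.2 = true}.image Prod.fst ↔ l.2 = true := by
      refine ⟨fun h ↦ ?_, fun h ↦ mem_image_of_mem _ (mem_filter.2 ⟨hl, h⟩)⟩
      obtain ⟨l', hl', heq⟩ := mem_image.1 h
      rw [← hinj (mem_filter.1 hl').1 hl heq]
      exact (mem_filter.1 hl').2
    beta_reduce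
    rw [image_image]
    refine (image_congr fun l hl ↦ ?_).trans image_id
    simp only [Function.comp_apply, hpositive l hl, Bool.decide_eq_true, id]
  · ext v
    have hAs : v ∈ A → v ∈ s := fun h ↦ mem_powerset.1 hA h
    simpa using hAs

open scoped Classical in
lemma card_isProperClause (n k : ℕ) :
    #{C : Finset (Fin n × Bool) | IsProperClause n k C} = 2 ^ k * n.choose k := by
  have hfiber (s) (hs : s ∈ powersetCard k (univ : Finset (Fin n))) :
      #{C ∈ {C : Finset (Fin n × Bool) | IsProperClause n k C} | C.image Prod.fst = s} = 2 ^ k := by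
    obtain rfl := (mem_powersetCard.1 hs).2
    rw [filter_filter, ← card_image_fst_eq]
    congr! 2 with C
    exact ⟨fun h ↦ ⟨h.1.1, h.2⟩, fun h ↦ ⟨⟨h.1, congrArg card h.2⟩, h.2⟩⟩
  rw [card_eq_sum_card_fiberwise (f := fun C ↦ C.image Prod.fst)
    (t := powersetCard k (univ : Finset (Fin n))), sum_congr rfl hfiber]
  · simp [mul_comm]
  · exact fun C hC ↦ mem_coe.2 (mem_powersetCard_univ.2 (mem_filter.1 (mem_coe.1 hC)).2.2)

open scoped Classical in
/-- The support of the random formula `F_k(n, m)`: all sets of `m` proper `k`-clauses. -/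
noncomputable def properFormulas (n k m : ℕ) : Finset (Finset (Finset (Fin n × Bool))) :=
  powersetCard m {C | IsProperClause n k C}

lemma card_properFormulas (n k m : ℕ) :
    #(properFormulas n k m) = (2 ^ k * n.choose k).choose m := by
  rw [properFormulas, card_powersetCard, card_isProperClause]

lemma mem_properFormulas {n k m : ℕ} {G : Finset (Finset (Fin n × Bool))} :
    G ∈ properFormulas n k m ↔ #G = m ∧ ∀ C ∈ G, IsProperClause n k C := by
  simp [properFormulas, mem_powersetCard, subset_iff, and_comm]

lemma partitionFunction_clauseWeight_eq_zero {n k m : ℕ} (hk : 2 ≤ k)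
    {F : Fin m → Fin k → Fin n × Bool} (hF : ¬IsNAESatisfiable (toFormula F)) :
    partitionFunction (clauseWeight (naeBias k) 1) F = 0 := by
  refine expect_eq_zero fun σ _ ↦ ?_
  obtain ⟨i, hi⟩ : ∃ i, ¬NAESatisfiesClause σ (univ.image (F i)) := by
    by_contra! h
    exact hF ⟨σ, fun C hC ↦ by obtain ⟨i, -, rfl⟩ := mem_image.1 hC; exact h i⟩
  refine prod_eq_zero (mem_univ i) (clauseWeight_naeBias_eq_zero hk ?_)
  simp only [NAESatisfiesClause, mem_image, mem_univ, true_and, exists_exists_eq_and, not_and_or,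
    not_exists, not_not] at hi
  exact hi.symm.imp (fun h j ↦ literalSpin_eq_one_of_satisfied (h j))
    fun h j ↦ literalSpin_eq_neg_one_of_not_satisfied (h j)

open scoped Classical in
lemma card_unsatisfiable_mul_le {k : ℕ} (hk : 2 ≤ k) (n m : ℕ) :
    #{G ∈ properFormulas n k m | ¬IsNAESatisfiable G} * (m.factorial * k.factorial ^ m) ≤
      #{F : Fin m → Fin k → Fin n × Bool |
        partitionFunction (clauseWeight (naeBias k) 1) F = 0} := by
  refine (card_mul_le_card_toFormula_mem (fun G hG ↦ ?_) fun G hG C hC ↦ ?_).trans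
    (card_le_card fun F hF ↦ ?_)
  · exact (mem_properFormulas.1 (mem_filter.1 hG).1).1
  · exact ((mem_properFormulas.1 (mem_filter.1 hG).1).2 C hC).1
  · have hF_mem := (mem_filter.1 hF).2
    exact mem_filter.2
      ⟨mem_univ F, partitionFunction_clauseWeight_eq_zero hk (mem_filter.1 hF_mem).2⟩

end ProperClauses

section Density

variable {k m n : ℕ} {r : ℝ}

lemma sub_pow_le_factorial_mul_choose (hkn : k ≤ n) :
    ((n : ℝ) - k) ^ k ≤ k.factorial * n.choose k := by
  refine le_trans ?_ ((div_le_iff₀' (by positivity)).1 (Nat.pow_le_choose k n))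
  rw [← Nat.cast_sub hkn]
  gcongr
  omega

lemma pow_mul_one_sub_le_factorial_mul_choose (hn : 0 < n) (hkn : k ≤ n) :
    (n : ℝ) ^ k * (1 - k ^ 2 / n) ≤ k.factorial * n.choose k := by
  have hratio : (k : ℝ) / n ≤ 1 := div_le_one_of_le₀ (Nat.cast_le.2 hkn) n.cast_nonneg
  calc (n : ℝ) ^ k * (1 - k ^ 2 / n) = n ^ k * (1 + k * -(k / n)) := by ring
    _ ≤ n ^ k * (1 + -(k / n)) ^ k := by
        gcongr
        exact one_add_mul_le_pow (by linarith) k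
    _ = (n - k) ^ k := by
        rw [← mul_pow]
        congr 1
        field_simp
        ring
    _ ≤ k.factorial * n.choose k := sub_pow_le_factorial_mul_choose hkn

lemma pow_mul_one_sub_le_card_sub_mul_factorial (hk : 2 ≤ k) (hn : 0 < n) (hkn : k ≤ n)
    (hm : m ≤ r * n) :
    (2 * n : ℝ) ^ k * (1 - (k ^ 2 + k.factorial * r) / n) ≤
      (((2 ^ k * n.choose k : ℕ) : ℝ) - m) * k.factorial := by
  have hn_pos : (0 : ℝ) < n := Nat.cast_pos.2 hn
  have hn_one : (1 : ℝ) ≤ n := Nat.one_le_cast.2 hn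
  have hr : 0 ≤ r := nonneg_of_mul_nonneg_left (m.cast_nonneg.trans hm) hn_pos
  have hsq : (n : ℝ) ^ 2 ≤ (2 * n) ^ k :=
    (pow_le_pow_right₀ hn_one hk).trans (pow_le_pow_left₀ hn_pos.le (by linarith) k)
  have hsubtracted : m * (k.factorial : ℝ) ≤ (2 * n) ^ k * (k.factorial * r / n) :=
    calc m * (k.factorial : ℝ) ≤ r * n * k.factorial := by gcongr
      _ = n ^ 2 * (k.factorial * r / n) := by field_simp
      _ ≤ (2 * n) ^ k * (k.factorial * r / n) := by gcongr
  calc (2 * n : ℝ) ^ k * (1 - (k ^ 2 + k.factorial * r) / n)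
      = 2 ^ k * (n ^ k * (1 - k ^ 2 / n)) - (2 * n) ^ k * (k.factorial * r / n) := by
        rw [mul_pow]
        ring
    _ ≤ 2 ^ k * ((k.factorial : ℝ) * n.choose k) - m * k.factorial :=
        sub_le_sub (mul_le_mul_of_nonneg_left (pow_mul_one_sub_le_factorial_mul_choose hn hkn)
          (by positivity)) hsubtracted
    _ = (((2 ^ k * n.choose k : ℕ) : ℝ) - m) * k.factorial := by
        push_cast
        ring

lemma exp_neg_two_mul_le_one_sub {u : ℝ} (hu : 0 ≤ u) (hu_le : u ≤ 1 / 2) :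
    exp (-(2 * u)) ≤ 1 - u := by
  rw [exp_neg, inv_le_comm₀ (exp_pos _) (by linarith)]
  refine le_trans ?_ (add_one_le_exp (2 * u))
  rw [inv_le_iff_one_le_mul₀ (by linarith)]
  nlinarith

lemma exp_neg_le_one_sub_div_pow {a : ℝ} (ha : 0 ≤ a) (hn : 0 < n) (han : 2 * a ≤ n)
    (hm : m ≤ r * n) : exp (-(2 * a * r)) ≤ (1 - a / n) ^ m := by
  have hn_pos : (0 : ℝ) < n := Nat.cast_pos.2 hn
  have hexponent : m * (2 * (a / n)) ≤ 2 * a * r :=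
    calc m * (2 * (a / n)) ≤ r * n * (2 * (a / n)) := by gcongr
      _ = 2 * a * r := by field_simp
  calc exp (-(2 * a * r)) ≤ exp (-(m * (2 * (a / n)))) := by gcongr
    _ = exp (-(2 * (a / n))) ^ m := by rw [← mul_neg, exp_nat_mul]
    _ ≤ (1 - a / n) ^ m := by
        gcongr
        refine exp_neg_two_mul_le_one_sub (by positivity) ?_
        rw [div_le_iff₀ hn_pos]
        linarith

lemma exp_neg_mul_card_le (hk : 2 ≤ k) (hn : 0 < n) (hkn : k ≤ n) (hm : m ≤ r * n)
    (hlarge : 2 * (k ^ 2 + k.factorial * r) ≤ n) :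
    exp (-(2 * (k ^ 2 + k.factorial * r) * r)) * Fintype.card (Fin m → Fin k → Fin n × Bool) ≤
      (2 ^ k * n.choose k).choose m * (m.factorial * k.factorial ^ m) := by
  have hn_pos : (0 : ℝ) < n := Nat.cast_pos.2 hn
  have hr : 0 ≤ r := nonneg_of_mul_nonneg_left (m.cast_nonneg.trans hm) hn_pos
  set a : ℝ := k ^ 2 + k.factorial * r
  have hratio : a / n ≤ 1 / 2 := by rw [div_le_iff₀ hn_pos]; linarith
  have hbase : 0 < (2 * n : ℝ) ^ k * (1 - a / n) := mul_pos (by positivity) (by linarith)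
  have hcount := pow_mul_one_sub_le_card_sub_mul_factorial hk hn hkn hm
  have hm_le : m ≤ 2 ^ k * n.choose k := by
    have := pos_of_mul_pos_left (hbase.trans_le hcount) (Nat.cast_nonneg _)
    exact_mod_cast (sub_pos.1 this).le
  calc exp (-(2 * a * r)) * Fintype.card (Fin m → Fin k → Fin n × Bool)
      = exp (-(2 * a * r)) * ((2 * n : ℝ) ^ k) ^ m := by simp [mul_comm]
    _ ≤ (1 - a / n) ^ m * ((2 * n : ℝ) ^ k) ^ m := by
        gcongr
        exact exp_neg_le_one_sub_div_pow (by positivity) hn hlarge hm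
    _ = ((2 * n : ℝ) ^ k * (1 - a / n)) ^ m := by rw [← mul_pow, mul_comm]
    _ ≤ (((2 ^ k * n.choose k : ℕ) - m) * k.factorial) ^ m := by gcongr
    _ = ((2 ^ k * n.choose k : ℕ) - m : ℝ) ^ m * (k.factorial : ℝ) ^ m := mul_pow ..
    _ ≤ m.factorial * (2 ^ k * n.choose k).choose m * (k.factorial : ℝ) ^ m := by
        gcongr
        exact sub_pow_le_factorial_mul_choose hm_le
    _ = _ := by ring

end Density

section UniformFormulas

variable {k m n : ℕ} {c r : ℝ}

open scoped Classical in
lemma card_satisfiable_subtype (n k m : ℕ) :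
    Nat.card {F : Finset (Finset (Fin n × Bool)) //
      F.card = m ∧ (∀ C ∈ F, IsProperClause n k C) ∧ IsNAESatisfiable F} =
      #{F ∈ properFormulas n k m | IsNAESatisfiable F} := by
  rw [Nat.subtype_card]
  simp [mem_properFormulas, and_assoc]

open scoped Classical in
lemma card_unsatisfiable_div_le (hk : 2 ≤ k) (hn : 0 < n) (hc : 0 < c)
    (hcard : c * Fintype.card (Fin m → Fin k → Fin n × Bool) ≤
      (2 ^ k * n.choose k).choose m * (m.factorial * k.factorial ^ m)) :
    (#{G ∈ properFormulas n k m | ¬IsNAESatisfiable G} : ℝ) / #(properFormulas n k m) ≤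
      (#{F : Fin m → Fin k → Fin n × Bool |
          partitionFunction (clauseWeight (naeBias k) 1) F = 0} : ℝ) /
        Fintype.card (Fin m → Fin k → Fin n × Bool) / c := by
  have : NeZero n := ⟨hn.ne'⟩
  have horders : (0 : ℝ) < m.factorial * k.factorial ^ m := by positivity
  have hunsat := card_unsatisfiable_mul_le hk n m
  rw [card_properFormulas, ← mul_div_mul_right _ _ horders.ne', div_div, mul_comm _ c]
  gcongr
  exact_mod_cast hunsat

lemma tendsto_card_satisfiable_div (hk : 400 ≤ k) (hr : 0 ≤ r) (hr_le : r ≤ naeDensityBound k) :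
    Tendsto (fun n : ℕ ↦
      (Nat.card {F : Finset (Finset (Fin n × Bool)) //
          F.card = ⌊r * n⌋₊ ∧ (∀ C ∈ F, IsProperClause n k C) ∧ IsNAESatisfiable F} : ℝ) /
        (2 ^ k * n.choose k).choose ⌊r * n⌋₊) atTop (𝓝 1) := by
  classical
  set a : ℝ := k ^ 2 + k.factorial * r
  have hdense : ∀ᶠ n : ℕ in atTop, 0 < n ∧ exp (-(2 * a * r)) *
      Fintype.card (Fin ⌊r * n⌋₊ → Fin k → Fin n × Bool) ≤
        (2 ^ k * n.choose k).choose ⌊r * n⌋₊ * (⌊r * n⌋₊.factorial * k.factorial ^ ⌊r * n⌋₊) := by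
    filter_upwards [eventually_gt_atTop 0, eventually_ge_atTop k,
      tendsto_natCast_atTop_atTop.eventually_ge_atTop (2 * a)] with n hn hkn hlarge
    exact ⟨hn, exp_neg_mul_card_le (by omega) hn hkn (Nat.floor_le (by positivity)) hlarge⟩
  have hunsat : Tendsto (fun n : ℕ ↦
      (#{G ∈ properFormulas n k ⌊r * n⌋₊ | ¬IsNAESatisfiable G} : ℝ) /
        #(properFormulas n k ⌊r * n⌋₊)) atTop (𝓝 0) := by
    have hbound := (tendsto_card_partitionFunction_eq_zero_div hk hr hr_le).div_const
      (exp (-(2 * a * r)))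
    rw [zero_div] at hbound
    refine squeeze_zero' (.of_forall fun n ↦ by positivity) ?_ hbound
    filter_upwards [hdense] with n hn
    exact card_unsatisfiable_div_le (by omega) hn.1 (exp_pos _) hn.2
  rw [← sub_zero (1 : ℝ)]
  refine (hunsat.const_sub 1).congr' ?_
  filter_upwards [hdense] with n ⟨hn, hcard⟩
  have : NeZero n := ⟨hn.ne'⟩
  have hpos : (#(properFormulas n k ⌊r * n⌋₊) : ℝ) ≠ 0 := by
    rw [card_properFormulas]
    exact (pos_of_mul_pos_left (lt_of_lt_of_le (by positivity) hcard) (by positivity)).ne'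
  rw [card_satisfiable_subtype, ← card_properFormulas, sub_eq_iff_eq_add, ← add_div, ← Nat.cast_add,
    card_filter_add_card_filter_not, div_self hpos]

end UniformFormulas

/-- There is a sequence `t k → 0` such that for all `k ≥ 3` and
`0 < r < 2^(k-1) ln 2 - (ln 2)/2 - (1 + t k)/2`, the probability that a uniformly
random `k`-CNF formula with `⌊rn⌋` clauses is NAE-satisfiable tends to `1`. -/
theorem nae_ksat_sat_whp :
    ∃ t : ℕ → ℝ, Filter.Tendsto t Filter.atTop (nhds 0) ∧
      ∀ k : ℕ, 3 ≤ k → ∀ r : ℝ, 0 < r →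
        r < 2 ^ (k - 1) * Real.log 2 - Real.log 2 / 2 - (1 + t k) / 2 →
        Filter.Tendsto
          (fun n : ℕ =>
            (Nat.card {F : Finset (Finset (Fin n × Bool)) //
                F.card = ⌊r * (n : ℝ)⌋₊ ∧ (∀ C ∈ F, IsProperClause n k C) ∧
                  IsNAESatisfiable F} : ℝ) /
              (Nat.choose (2 ^ k * Nat.choose n k) ⌊r * (n : ℝ)⌋₊ : ℝ))
          Filter.atTop (nhds 1) := by
  -- For `k < 400` the value of `t k` makes the range of `r` empty.
  refine ⟨fun k ↦ if k < 400 then 2 * 2 ^ (k - 1) else 8 / k, ?_, fun k _ r hr hr_lt ↦ ?_⟩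
  · refine (tendsto_const_div_atTop_nhds_zero_nat 8).congr' ?_
    filter_upwards [eventually_ge_atTop 400] with k hk
    rw [if_neg (by omega)]
  · beta_reduce at hr_lt
    split_ifs at hr_lt with hk
    · have hpow : (2 : ℝ) ^ (k - 1) * log 2 ≤ 2 ^ (k - 1) :=
        mul_le_of_le_one_right (by positivity) (by linarith [log_two_lt_d9])
      linarith [log_two_gt_d9]
    · exact tendsto_card_satisfiable_div (by omega) hr.le hr_lt.le
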